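/- arXiv:1909.10118 — 4 statements merged into one kernel-verified Lean document; each statement's English description precedes it below -/
import Mathlib

section
/- Let Q be a polynomial of degree n whose zeros all lie in the closed upper half-disk D⁺ = {z ∈ ℂ : |z| ≤ 1, Im z ≥ 0}, and for δ > 0 set E_δ := {x ∈ [-1,1] : |Q'(x)/Q(x)| ≤ nδ}. Then the Lebesgue measure of E_δ satisfies m(E_δ) < 70e·δ. -/
open Polynomial Set MeasureTheory

open Filter Topology ProbabilityTheory
open scoped NNReal

/-!
The logarithmic derivative `p = Q' / Q = ∑ 1 / (z - ζ)` maps the lower half-plane into the closed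
upper half-plane. The Cauchy distribution with location `x₀` and scale `γ` is the harmonic measure
of the lower half-plane seen from `a = x₀ - iγ`, so by Poisson's formula the mean over `ℝ` of the
nonnegative function `-Im (p + iD)⁻¹` is its value at `a`, which is at most `1 / (Im p(a) + D)`.
This function is at least `1 / (2D)` where `|p| ≤ D`, so Markov's inequality bounds the harmonic
measure of that set by `2D / Im p(a)`. At `a = -i` every zero in the half-disk contributes at least
`1/2` to `Im p(a)`, so `D = nδ` gives harmonic measure at most `4δ`. On `[-1, 1]` the density of the
Cauchy distribution is at least `1 / (2π)`, whence the Lebesgue measure is at most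
`8πδ < 70eδ`.
-/

section CauchyMeasure

variable {x₀ : ℝ} {γ : ℝ≥0}

lemma cauchyPDFReal_eq_inv_mul (x : ℝ) :
    (cauchyPDFReal x₀ γ x : ℂ) =
      γ / Real.pi * (((x : ℂ) - ⟨x₀, -γ⟩) * ((x : ℂ) - ⟨x₀, γ⟩))⁻¹ := by
  have hprod : ((x : ℂ) - ⟨x₀, -γ⟩) * ((x : ℂ) - ⟨x₀, γ⟩) = ((x - x₀) ^ 2 + γ ^ 2 : ℝ) := by
    rw [Complex.ext_iff, Complex.ofReal_re, Complex.ofReal_im]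
    simp only [Complex.mul_re, Complex.mul_im, Complex.sub_re, Complex.sub_im, Complex.ofReal_re,
      Complex.ofReal_im]
    constructor <;> ring
  rw [hprod, cauchyPDFReal_def]
  push_cast
  ring

lemma integral_cauchyMeasure {E : Type*} [NormedAddCommGroup E] [NormedSpace ℝ E]
    (hγ : γ ≠ 0) (g : ℝ → E) :
    ∫ x, g x ∂cauchyMeasure x₀ γ = ∫ x, cauchyPDFReal x₀ γ x • g x := by
  rw [cauchyMeasure_of_scale_ne_zero _ hγ,
    integral_withDensity_eq_integral_toReal_smul (by fun_prop) (by simp [cauchyPDF])]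
  simp only [cauchyPDF, ENNReal.toReal_ofReal (cauchyPDF_pos x₀ hγ _).le]

lemma ae_cauchyMeasure_of_ae_volume (hγ : γ ≠ 0) {P : ℝ → Prop} (h : ∀ᵐ x, P x) :
    ∀ᵐ x ∂cauchyMeasure x₀ γ, P x := by
  rw [cauchyMeasure_of_scale_ne_zero _ hγ]
  exact (withDensity_absolutelyContinuous _ _).ae_le h

lemma volume_le_mul_cauchyMeasure (hγ : γ ≠ 0) {s : Set ℝ}
    (hs : s ⊆ Icc (x₀ - γ) (x₀ + γ)) :
    volume s ≤ ENNReal.ofReal (2 * Real.pi * γ) * cauchyMeasure x₀ γ s := by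
  have hpdf : ∀ x ∈ s, 1 ≤ ENNReal.ofReal (2 * Real.pi * γ) * cauchyPDF x₀ γ x := fun x hx => by
    have hsq : (x - x₀) ^ 2 ≤ (γ : ℝ) ^ 2 := by
      refine sq_le_sq' ?_ ?_ <;> linarith [(hs hx).1, (hs hx).2]
    rw [cauchyPDF_def, ← ENNReal.ofReal_mul (by positivity), ENNReal.one_le_ofReal,
      cauchyPDFReal_def]
    have : (0 : ℝ) < γ := by positivity
    field_simp
    linarith
  calc volume s = ∫⁻ _ in s, 1 := (setLIntegral_one s).symm
    _ ≤ ∫⁻ x in s, ENNReal.ofReal (2 * Real.pi * γ) * cauchyPDF x₀ γ x :=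
        setLIntegral_mono_ae (by fun_prop) (ae_of_all _ hpdf)
    _ = ENNReal.ofReal (2 * Real.pi * γ) * cauchyMeasure x₀ γ s := by
        rw [lintegral_const_mul _ (by fun_prop), cauchyMeasure_of_scale_ne_zero _ hγ,
          withDensity_apply']

end CauchyMeasure

section PoissonFormula

variable {E : Type*} [NormedAddCommGroup E] [NormedSpace ℂ E] {f : ℂ → E}

lemma continuous_ofReal_of_diffContOnCl (hf : DiffContOnCl ℂ f {z | z.im < 0}) :
    Continuous fun x : ℝ => f x :=
  hf.continuousOn.comp_continuous Complex.continuous_ofReal fun x => by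
    simp [Complex.closure_setOfPred_im_lt]

lemma integral_eq_of_diffContOnCl_im_neg [CompleteSpace E]
    (hf : DiffContOnCl ℂ f {z | z.im < 0}) {R : ℝ} (hR : 0 ≤ R) :
    ∫ x in (-R)..R, f x = (∫ x in (-R)..R, f (x + (-R : ℝ) * Complex.I))
      + Complex.I • (∫ y in (-R)..0, f (R + y * Complex.I))
      - Complex.I • (∫ y in (-R)..0, f ((-R : ℝ) + y * Complex.I)) := by
  have hR' : -R ≤ 0 := neg_nonpos.2 hR
  have hcont : ContinuousOn f {z | z.im ≤ 0} := by
    simpa only [Complex.closure_setOfPred_im_lt] using hf.continuousOn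
  have cauchy := Complex.integral_boundary_rect_eq_zero_of_continuousOn_of_differentiableOn f
    ⟨-R, -R⟩ ⟨R, 0⟩
    (hcont.mono fun z hz => (uIcc_of_le hR' ▸ hz.2 : z.im ∈ Icc (-R) 0).2)
    (hf.differentiableOn.mono fun z hz => (max_eq_right hR' ▸ hz.2.2 : z.im < 0))
  simp only [Complex.ofReal_zero, zero_mul, add_zero] at cauchy
  rw [← sub_eq_zero, ← neg_eq_zero, ← cauchy]
  abel

lemma norm_integral_le_of_diffContOnCl_im_neg [CompleteSpace E]
    (hf : DiffContOnCl ℂ f {z | z.im < 0}) {R C : ℝ} (hR : 0 ≤ R)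
    (hC : ∀ z : ℂ, z.im ≤ 0 → R ≤ ‖z‖ → ‖f z‖ ≤ C) :
    ‖∫ x in (-R)..R, f x‖ ≤ 4 * R * C := by
  have bottom : ‖∫ x in (-R)..R, f (x + (-R : ℝ) * Complex.I)‖ ≤ C * |R - -R| :=
    intervalIntegral.norm_integral_le_of_norm_le_const fun x _ =>
      hC _ (by simpa using hR) <| by
        simpa [abs_of_nonneg hR] using Complex.abs_im_le_norm (x + ((-R : ℝ) : ℂ) * Complex.I)
  have side (s : ℝ) (hs : |s| = R) :
      ‖∫ y in (-R)..0, f (s + y * Complex.I)‖ ≤ C * |0 - -R| :=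
    intervalIntegral.norm_integral_le_of_norm_le_const fun y hy =>
      hC _ (by simpa using (uIoc_of_le (neg_nonpos.2 hR) ▸ hy : y ∈ Ioc (-R) 0).2) <| by
        simpa [hs] using Complex.abs_re_le_norm (s + y * Complex.I)
  have right := side R (abs_of_nonneg hR)
  have left := side (-R) (by rw [abs_neg, abs_of_nonneg hR])
  rw [abs_of_nonneg (by linarith)] at bottom left right
  rw [integral_eq_of_diffContOnCl_im_neg hf hR]
  refine (norm_sub_le_of_le (norm_add_le_of_le bottom ?_) ?_).trans
    (by linarith : C * (R - -R) + C * (0 - -R) + C * (0 - -R) ≤ 4 * R * C)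
  · rwa [norm_smul, Complex.norm_I, one_mul]
  · rwa [norm_smul, Complex.norm_I, one_mul]

lemma norm_le_two_mul_norm_sub {z a : ℂ} (h : 2 * ‖a‖ ≤ ‖z‖) : ‖z‖ ≤ 2 * ‖z - a‖ := by
  linarith [norm_sub_norm_le z a]

lemma diffContOnCl_inv_smul_dslope [CompleteSpace E] (hf : DiffContOnCl ℂ f {z | z.im < 0})
    {a b : ℂ} (ha : a.im < 0) (hb : 0 < b.im) :
    DiffContOnCl ℂ (fun z => (z - b)⁻¹ • dslope f a z) {z | z.im < 0} := by
  have hnhds : {z : ℂ | z.im < 0} ∈ 𝓝 a := (Complex.isOpen_im_lt 0).mem_nhds ha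
  have hinv : DiffContOnCl ℂ (fun z : ℂ => (z - b)⁻¹) {z | z.im < 0} := by
    refine DifferentiableOn.diffContOnCl fun z hz => ?_
    rw [Complex.closure_setOfPred_im_lt, mem_ofPred_eq] at hz
    have hzb : z - b ≠ 0 := sub_ne_zero.2 fun h => by rw [h] at hz; linarith
    exact ((differentiableAt_id.sub_const b).inv hzb).differentiableWithinAt
  have hslope : DiffContOnCl ℂ (dslope f a) {z | z.im < 0} :=
    ⟨(Complex.differentiableOn_dslope hnhds).2 hf.differentiableOn,
      (continuousOn_dslope (mem_of_superset hnhds subset_closure)).2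
        ⟨hf.continuousOn, hf.differentiableOn.differentiableAt hnhds⟩⟩
  exact hinv.smul hslope

lemma norm_inv_smul_dslope_le {M : ℝ} (hM : ∀ z : ℂ, z.im ≤ 0 → ‖f z‖ ≤ M) {a b z : ℂ}
    (ha : a.im ≤ 0) (hz : z.im ≤ 0) (hz0 : 0 < ‖z‖) (haz : 2 * ‖a‖ ≤ ‖z‖)
    (hbz : 2 * ‖b‖ ≤ ‖z‖) :
    ‖(z - b)⁻¹ • dslope f a z‖ ≤ 8 * M / ‖z‖ ^ 2 := by
  have hza := norm_le_two_mul_norm_sub haz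
  have hzb := norm_le_two_mul_norm_sub hbz
  have hne : z ≠ a := by
    rintro rfl
    rw [sub_self, norm_zero] at hza
    linarith
  have hnum : ‖f z - f a‖ ≤ 2 * M := by linarith [norm_sub_le (f z) (f a), hM z hz, hM a ha]
  rw [dslope_of_ne _ hne, slope_def_module, norm_smul, norm_smul, norm_inv, norm_inv]
  calc ‖z - b‖⁻¹ * (‖z - a‖⁻¹ * ‖f z - f a‖)
      ≤ (‖z‖ / 2)⁻¹ * ((‖z‖ / 2)⁻¹ * (2 * M)) := by gcongr <;> linarith
    _ = 8 * M / ‖z‖ ^ 2 := by ring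

variable [CompleteSpace E] {M x₀ : ℝ} {γ : ℝ≥0}

-- Subtracting `f ⟨x₀, -γ⟩` cancels the pole of the Poisson kernel in the lower half-plane: the
-- integrand becomes holomorphic there and decays quadratically, so Cauchy's theorem applies.
lemma tendsto_integral_cauchyPDFReal_smul_sub (hf : DiffContOnCl ℂ f {z | z.im < 0})
    (hM : ∀ z : ℂ, z.im ≤ 0 → ‖f z‖ ≤ M) (hγ : γ ≠ 0) :
    Tendsto (fun R : ℝ => ∫ x in (-R)..R, cauchyPDFReal x₀ γ x • (f x - f ⟨x₀, -γ⟩))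
      atTop (𝓝 0) := by
  have hγpos : (0 : ℝ) < γ := by positivity
  set a : ℂ := ⟨x₀, -γ⟩
  set b : ℂ := ⟨x₀, γ⟩
  set g : ℂ → E := fun z => (z - b)⁻¹ • dslope f a z
  have hg : DiffContOnCl ℂ g {z | z.im < 0} :=
    diffContOnCl_inv_smul_dslope hf (by simpa [a] using hγpos) (by simpa [b] using hγpos)
  have hreal (x : ℝ) :
      cauchyPDFReal x₀ γ x • (f x - f a) = (γ / Real.pi : ℂ) • g x := by
    have hne : (x : ℂ) ≠ a := fun h => by simpa [a, hγ] using congrArg Complex.im h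
    simp only [g]
    rw [dslope_of_ne _ hne, slope_def_module, ← Complex.coe_smul, cauchyPDFReal_eq_inv_mul,
      smul_smul, smul_smul, mul_inv, mul_comm (_ - a)⁻¹, mul_assoc]
  suffices Tendsto (fun R : ℝ => ∫ x in (-R)..R, g x) atTop (𝓝 0) by
    simpa only [hreal, intervalIntegral.integral_smul, smul_zero] using
      this.const_smul (γ / Real.pi : ℂ)
  have hlim : Tendsto (fun R : ℝ => 32 * M / R) atTop (𝓝 0) :=
    tendsto_const_nhds.div_atTop tendsto_id
  refine squeeze_zero_norm' ?_ hlim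
  filter_upwards [eventually_gt_atTop 0, eventually_ge_atTop (2 * ‖a‖),
    eventually_ge_atTop (2 * ‖b‖)] with R hR hRa hRb
  have hM0 : 0 ≤ M := (norm_nonneg _).trans (hM 0 le_rfl)
  calc ‖∫ x in (-R)..R, g x‖ ≤ 4 * R * (8 * M / R ^ 2) :=
        norm_integral_le_of_diffContOnCl_im_neg hg hR.le fun z hz hRz =>
          (norm_inv_smul_dslope_le hM (by simp [a]) hz (hR.trans_le hRz) (hRa.trans hRz)
            (hRb.trans hRz)).trans (by gcongr)
    _ = 32 * M / R := by field_simp; ring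

lemma integral_cauchyMeasure_of_diffContOnCl (hf : DiffContOnCl ℂ f {z | z.im < 0})
    (hM : ∀ z : ℂ, z.im ≤ 0 → ‖f z‖ ≤ M) (hγ : γ ≠ 0) :
    ∫ x : ℝ, f x ∂cauchyMeasure x₀ γ = f ⟨x₀, -γ⟩ := by
  have hcont : Continuous fun x : ℝ => f x := continuous_ofReal_of_diffContOnCl hf
  have hbound (x : ℝ) : ‖f x‖ ≤ M := hM x (by simp)
  have hint : Integrable (fun x : ℝ => f x) (cauchyMeasure x₀ γ) :=
    .of_bound hcont.aestronglyMeasurable M (ae_of_all _ hbound)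
  have hint' : Integrable fun x : ℝ => cauchyPDFReal x₀ γ x • (f x - f ⟨x₀, -γ⟩) :=
    (integrable_cauchyPDFReal x₀).smul_bdd (M + ‖f ⟨x₀, -γ⟩‖)
      (hcont.sub continuous_const).aestronglyMeasurable
      (ae_of_all _ fun x => norm_sub_le_of_le (hbound x) le_rfl)
  have hzero : ∫ x : ℝ, (f x - f ⟨x₀, -γ⟩) ∂cauchyMeasure x₀ γ = 0 := by
    rw [integral_cauchyMeasure hγ]
    exact tendsto_nhds_unique
      (intervalIntegral_tendsto_integral hint' tendsto_neg_atTop_atBot tendsto_id)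
      (tendsto_integral_cauchyPDFReal_smul_sub hf hM hγ)
  rw [integral_sub hint (integrable_const _), integral_const, probReal_univ, one_smul] at hzero
  exact sub_eq_zero.1 hzero

end PoissonFormula

section BoundaryValues

lemma im_sub_mul_I_neg {z : ℂ} (hz : z.im ≤ 0) {ε : ℝ} (hε : 0 < ε) :
    (z - ε * Complex.I).im < 0 := by
  simpa using hz.trans_lt hε

lemma tendsto_sub_mul_I_of_continuousWithinAt {X : Type*} [TopologicalSpace X] {f : ℂ → X}
    {z : ℂ} (hz : z.im ≤ 0) (hf : ContinuousWithinAt f {z | z.im < 0} z) :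
    Tendsto (fun ε : ℝ => f (z - ε * Complex.I)) (𝓝[>] 0) (𝓝 (f z)) := by
  refine hf.tendsto.comp (tendsto_nhdsWithin_iff.2 ⟨?_, ?_⟩)
  · have : Continuous fun ε : ℝ => z - ε * Complex.I := by fun_prop
    simpa using (this.tendsto 0).mono_left nhdsWithin_le_nhds
  · filter_upwards [self_mem_nhdsWithin] with ε hε
    exact im_sub_mul_I_neg hz hε

variable {E : Type*} [NormedAddCommGroup E] [NormedSpace ℂ E] {f : ℂ → E}

lemma diffContOnCl_comp_sub_mul_I (hf : DifferentiableOn ℂ f {z | z.im < 0}) {ε : ℝ}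
    (hε : 0 < ε) : DiffContOnCl ℂ (fun z => f (z - ε * Complex.I)) {z | z.im < 0} := by
  refine DifferentiableOn.diffContOnCl ?_
  rw [Complex.closure_setOfPred_im_lt]
  exact hf.comp (by fun_prop) fun z hz => im_sub_mul_I_neg hz hε

variable {M x₀ : ℝ} {γ : ℝ≥0}

lemma exists_tendsto_diffContOnCl_approx (hf : DifferentiableOn ℂ f {z | z.im < 0})
    (hM : ∀ z : ℂ, z.im < 0 → ‖f z‖ ≤ M) :
    ∃ F : ℕ → ℂ → E, (∀ k, DiffContOnCl ℂ (F k) {z | z.im < 0}) ∧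
      (∀ k z, z.im ≤ 0 → ‖F k z‖ ≤ M) ∧
      ∀ z : ℂ, z.im ≤ 0 → ContinuousWithinAt f {z | z.im < 0} z →
        Tendsto (fun k => F k z) atTop (𝓝 (f z)) := by
  obtain ⟨ε, -, hε, hε0⟩ := exists_seq_strictAnti_tendsto (0 : ℝ)
  refine ⟨fun k z => f (z - ε k * Complex.I), fun k => diffContOnCl_comp_sub_mul_I hf (hε k),
    fun k z hz => hM _ (im_sub_mul_I_neg hz (hε k)), fun z hz hfz => ?_⟩
  exact (tendsto_sub_mul_I_of_continuousWithinAt hz hfz).comp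
    (tendsto_nhdsWithin_iff.2 ⟨hε0, Eventually.of_forall hε⟩)

theorem integrable_cauchyMeasure_of_bounded (hf : DifferentiableOn ℂ f {z | z.im < 0})
    (hM : ∀ z : ℂ, z.im < 0 → ‖f z‖ ≤ M)
    (hbdry : ∀ᵐ x : ℝ, ContinuousWithinAt f {z | z.im < 0} x) (hγ : γ ≠ 0) :
    Integrable (fun x : ℝ => f x) (cauchyMeasure x₀ γ) := by
  obtain ⟨F, hF, hFM, hlim⟩ := exists_tendsto_diffContOnCl_approx hf hM
  have hlim' : ∀ᵐ x : ℝ ∂cauchyMeasure x₀ γ, Tendsto (fun k => F k x) atTop (𝓝 (f x)) :=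
    ae_cauchyMeasure_of_ae_volume hγ (hbdry.mono fun x hx => hlim x (by simp) hx)
  refine .of_bound (aestronglyMeasurable_of_tendsto_ae atTop (fun k =>
    (continuous_ofReal_of_diffContOnCl (hF k)).aestronglyMeasurable) hlim') M ?_
  filter_upwards [hlim'] with x hx
  exact le_of_tendsto' hx.norm fun k => hFM k x (by simp)

theorem integral_cauchyMeasure_of_bounded [CompleteSpace E]
    (hf : DifferentiableOn ℂ f {z | z.im < 0})
    (hM : ∀ z : ℂ, z.im < 0 → ‖f z‖ ≤ M)
    (hbdry : ∀ᵐ x : ℝ, ContinuousWithinAt f {z | z.im < 0} x) (hγ : γ ≠ 0) :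
    ∫ x : ℝ, f x ∂cauchyMeasure x₀ γ = f ⟨x₀, -γ⟩ := by
  obtain ⟨F, hF, hFM, hlim⟩ := exists_tendsto_diffContOnCl_approx hf hM
  have him : (⟨x₀, -γ⟩ : ℂ).im < 0 := by simpa using pos_of_ne_zero hγ
  have hpoint : Tendsto (fun k => F k ⟨x₀, -γ⟩) atTop (𝓝 (f ⟨x₀, -γ⟩)) :=
    hlim _ him.le (hf.continuousOn _ him)
  have hintegral : Tendsto (fun k => ∫ x : ℝ, F k x ∂cauchyMeasure x₀ γ) atTop
      (𝓝 (∫ x : ℝ, f x ∂cauchyMeasure x₀ γ)) :=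
    tendsto_integral_of_dominated_convergence (fun _ => M)
      (fun k => (continuous_ofReal_of_diffContOnCl (hF k)).aestronglyMeasurable)
      (integrable_const M) (fun k => ae_of_all _ fun x => hFM k x (by simp))
      (ae_cauchyMeasure_of_ae_volume hγ (hbdry.mono fun x hx => hlim x (by simp) hx))
  refine tendsto_nhds_unique hintegral (hpoint.congr fun k => ?_)
  exact (integral_cauchyMeasure_of_diffContOnCl (hF k) (hFM k) hγ).symm

end BoundaryValues

section NonnegIm

lemma neg_im_inv (w : ℂ) : -(w⁻¹).im = w.im / ‖w‖ ^ 2 := by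
  rw [Complex.inv_im, neg_div, neg_neg, Complex.normSq_eq_norm_sq]

variable {w : ℂ} {D : ℝ}

lemma add_mul_I_ne_zero (hD : 0 < D) (hw : 0 ≤ w.im) : w + D * Complex.I ≠ 0 := fun h => by
  have : w.im + D = 0 := by simpa using congrArg Complex.im h
  linarith

lemma norm_inv_add_mul_I_le (hD : 0 < D) (hw : 0 ≤ w.im) :
    ‖(w + D * Complex.I)⁻¹‖ ≤ (w.im + D)⁻¹ := by
  rw [norm_inv]
  gcongr
  simpa using Complex.im_le_norm (w + D * Complex.I)

lemma neg_im_inv_add_mul_I_nonneg (hD : 0 < D) (hw : 0 ≤ w.im) :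
    0 ≤ -((w + D * Complex.I)⁻¹).im := by
  rw [neg_im_inv]
  exact div_nonneg (by simpa using add_nonneg hw hD.le) (sq_nonneg _)

lemma one_div_two_mul_le_neg_im_inv_add_mul_I (hD : 0 < D) (hw : 0 ≤ w.im) (hwD : ‖w‖ ≤ D) :
    1 / (2 * D) ≤ -((w + D * Complex.I)⁻¹).im := by
  have hre : (w + D * Complex.I).re = w.re := by simp
  have him : (w + D * Complex.I).im = w.im + D := by simp
  have hnorm : ‖w + D * Complex.I‖ ^ 2 = ‖w‖ ^ 2 + 2 * D * w.im + D ^ 2 := by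
    simp only [← Complex.normSq_eq_norm_sq, Complex.normSq_apply, hre, him]
    ring
  rw [neg_im_inv, hnorm, him, div_le_div_iff₀ (by positivity) (by positivity)]
  have : ‖w‖ ^ 2 ≤ D ^ 2 := by gcongr
  linarith

theorem mul_cauchyMeasure_neg_im_ge_le {f : ℂ → ℂ} (hf : DifferentiableOn ℂ f {z | z.im < 0})
    {M : ℝ} (hM : ∀ z : ℂ, z.im < 0 → ‖f z‖ ≤ M)
    (hbdry : ∀ᵐ x : ℝ, ContinuousWithinAt f {z | z.im < 0} x)
    (hnonneg : ∀ᵐ x : ℝ, 0 ≤ -(f x).im) (t x₀ : ℝ) {γ : ℝ≥0} (hγ : γ ≠ 0) :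
    t * (cauchyMeasure x₀ γ).real {x : ℝ | t ≤ -(f x).im} ≤ -(f ⟨x₀, -γ⟩).im := by
  have hint : Integrable (fun x : ℝ => f x) (cauchyMeasure x₀ γ) :=
    integrable_cauchyMeasure_of_bounded hf hM hbdry hγ
  calc t * (cauchyMeasure x₀ γ).real {x : ℝ | t ≤ -(f x).im}
      ≤ ∫ x : ℝ, -(f x).im ∂cauchyMeasure x₀ γ :=
        mul_meas_ge_le_integral_of_nonneg (ae_cauchyMeasure_of_ae_volume hγ hnonneg)
          hint.im.neg t
    _ = -(∫ x : ℝ, f x ∂cauchyMeasure x₀ γ).im := by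
        rw [integral_neg]
        exact congrArg Neg.neg (integral_im hint)
    _ = -(f ⟨x₀, -γ⟩).im := by rw [integral_cauchyMeasure_of_bounded hf hM hbdry hγ]

lemma im_nonneg_of_continuousWithinAt {p : ℂ → ℂ} (him : ∀ z : ℂ, z.im < 0 → 0 ≤ (p z).im)
    {z : ℂ} (hz : z.im ≤ 0) (hp : ContinuousWithinAt p {z | z.im < 0} z) : 0 ≤ (p z).im := by
  have hcl : z ∈ closure {z : ℂ | z.im < 0} := by rwa [Complex.closure_setOfPred_im_lt]
  have hpim : ContinuousWithinAt (fun z => (p z).im) {z | z.im < 0} z :=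
    Complex.continuous_im.continuousAt.comp_continuousWithinAt (f := p) hp
  exact continuousWithinAt_const.closure_le hcl hpim him

theorem im_mul_cauchyMeasure_norm_le_le {p : ℂ → ℂ} (hp : DifferentiableOn ℂ p {z | z.im < 0})
    (him : ∀ z : ℂ, z.im < 0 → 0 ≤ (p z).im)
    (hbdry : ∀ᵐ x : ℝ, ContinuousWithinAt p {z | z.im < 0} x)
    (hD : 0 < D) (x₀ : ℝ) {γ : ℝ≥0} (hγ : γ ≠ 0) :
    (p ⟨x₀, -γ⟩).im * (cauchyMeasure x₀ γ).real {x : ℝ | ‖p x‖ ≤ D} ≤ 2 * D := by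
  set μ := cauchyMeasure x₀ γ
  set f : ℂ → ℂ := fun z => (p z + D * Complex.I)⁻¹
  have hreal : ∀ᵐ x : ℝ, 0 ≤ (p x).im := hbdry.mono fun x hx =>
    im_nonneg_of_continuousWithinAt him (Complex.ofReal_im x).le hx
  have hf : DifferentiableOn ℂ f {z | z.im < 0} :=
    (hp.add_const _).fun_inv fun z hz => add_mul_I_ne_zero hD (him z hz)
  have hfD (z : ℂ) (hz : z.im < 0) : ‖f z‖ ≤ D⁻¹ :=
    (norm_inv_add_mul_I_le hD (him z hz)).trans (inv_anti₀ hD (by linarith [him z hz]))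
  have hfbdry : ∀ᵐ x : ℝ, ContinuousWithinAt f {z | z.im < 0} x := by
    filter_upwards [hbdry, hreal] with x hx hx0
    exact (hx.add continuousWithinAt_const).inv₀ (add_mul_I_ne_zero hD hx0)
  have hsub : μ.real {x : ℝ | ‖p x‖ ≤ D} ≤ μ.real {x : ℝ | 1 / (2 * D) ≤ -(f x).im} := by
    refine ENNReal.toReal_mono (measure_ne_top _ _) (measure_mono_ae ?_)
    filter_upwards [ae_cauchyMeasure_of_ae_volume hγ hreal] with x hx hxD
    exact one_div_two_mul_le_neg_im_inv_add_mul_I hD hx hxD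
  have hweak : 1 / (2 * D) * μ.real {x : ℝ | 1 / (2 * D) ≤ -(f x).im} ≤ -(f ⟨x₀, -γ⟩).im :=
    mul_cauchyMeasure_neg_im_ge_le hf hfD hfbdry
      (hreal.mono fun x hx => neg_im_inv_add_mul_I_nonneg hD hx) _ x₀ hγ
  have hp0 : 0 ≤ (p ⟨x₀, -γ⟩).im := him _ (by simpa using pos_of_ne_zero hγ)
  have hfa : -(f ⟨x₀, -γ⟩).im ≤ ((p ⟨x₀, -γ⟩).im + D)⁻¹ :=
    (neg_le_abs _).trans ((Complex.abs_im_le_norm _).trans (norm_inv_add_mul_I_le hD hp0))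
  calc (p ⟨x₀, -γ⟩).im * μ.real {x : ℝ | ‖p x‖ ≤ D}
      ≤ ((p ⟨x₀, -γ⟩).im + D) * μ.real {x : ℝ | 1 / (2 * D) ≤ -(f x).im} := by
        gcongr
        linarith
    _ = 2 * D * ((p ⟨x₀, -γ⟩).im + D) *
          (1 / (2 * D) * μ.real {x : ℝ | 1 / (2 * D) ≤ -(f x).im}) := by field_simp
    _ ≤ 2 * D * ((p ⟨x₀, -γ⟩).im + D) * ((p ⟨x₀, -γ⟩).im + D)⁻¹ := by
        gcongr
        exact hweak.trans hfa
    _ = 2 * D := by field_simp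

end NonnegIm

section LogarithmicDerivative

variable {Q : ℂ[X]} {z : ℂ}

lemma natDegree_mul_le_im_derivative_div {c : ℝ} (hQ : Q.eval z ≠ 0)
    (h : ∀ ζ, Q.IsRoot ζ → c ≤ (1 / (z - ζ)).im) :
    Q.natDegree * c ≤ (Q.derivative.eval z / Q.eval z).im := by
  have hs : Q.Splits := IsAlgClosed.splits Q
  rw [hs.eval_derivative_div_eval_of_ne_zero hQ, hs.natDegree_eq_card_roots, ← nsmul_eq_mul,
    ← Complex.coe_imAddGroupHom, map_multiset_sum, Multiset.map_map]
  refine le_of_eq_of_le (by simp) (Multiset.card_nsmul_le_sum (a := c) fun y hy => ?_)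
  obtain ⟨ζ, hζ, rfl⟩ := Multiset.mem_map.1 hy
  exact h ζ (isRoot_of_mem_roots hζ)

lemma im_derivative_div_nonneg (hroots : ∀ ζ : ℂ, Q.IsRoot ζ → 0 ≤ ζ.im) (hz : z.im ≤ 0) :
    0 ≤ (Q.derivative.eval z / Q.eval z).im := by
  by_cases hQ : Q.eval z = 0
  · simp [hQ]
  · simpa using natDegree_mul_le_im_derivative_div hQ (c := 0) fun ζ hζ => by
      rw [one_div, Complex.inv_im]
      exact div_nonneg (by simpa using hz.trans (hroots ζ hζ)) (Complex.normSq_nonneg _)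

lemma half_le_im_one_div_neg_I_sub {ζ : ℂ} (hζ : ‖ζ‖ ≤ 1) (hζ0 : 0 ≤ ζ.im) :
    1 / 2 ≤ (1 / (⟨0, -1⟩ - ζ)).im := by
  have hsq : ζ.re * ζ.re + ζ.im * ζ.im ≤ 1 := by
    rw [← Complex.normSq_apply, Complex.normSq_eq_norm_sq]
    exact pow_le_one₀ (norm_nonneg ζ) hζ
  have him : (1 / (⟨0, -1⟩ - ζ)).im =
      (1 + ζ.im) / (ζ.re * ζ.re + (1 + ζ.im) * (1 + ζ.im)) := by
    rw [one_div, Complex.inv_im, Complex.normSq_apply, Complex.sub_re, Complex.sub_im]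
    ring
  rw [him, div_le_div_iff₀ (by norm_num) (by nlinarith)]
  linarith

lemma ae_continuousWithinAt_derivative_div (hQ : Q ≠ 0) (s : Set ℂ) :
    ∀ᵐ x : ℝ, ContinuousWithinAt (fun z => Q.derivative.eval z / Q.eval z) s x := by
  have hfin : {x : ℝ | Q.IsRoot x}.Finite :=
    (finite_setOfPred_isRoot hQ).preimage Complex.ofReal_injective.injOn
  filter_upwards [hfin.countable.ae_notMem volume] with x hx
  exact (Q.derivative.continuous.continuousAt.div Q.continuous.continuousAt hx).continuousWithinAt

theorem im_mul_cauchyMeasure_norm_derivative_div_le (hQ : Q ≠ 0)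
    (hroots : ∀ ζ : ℂ, Q.IsRoot ζ → 0 ≤ ζ.im) {D : ℝ} (hD : 0 < D) (x₀ : ℝ) {γ : ℝ≥0}
    (hγ : γ ≠ 0) :
    (Q.derivative.eval ⟨x₀, -γ⟩ / Q.eval ⟨x₀, -γ⟩).im *
      (cauchyMeasure x₀ γ).real {x : ℝ | ‖Q.derivative.eval (x : ℂ) / Q.eval (x : ℂ)‖ ≤ D} ≤
      2 * D :=
  im_mul_cauchyMeasure_norm_le_le (p := fun z => Q.derivative.eval z / Q.eval z)
    (Q.derivative.differentiableOn.fun_div Q.differentiableOn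
      fun z hz hQz => not_le_of_gt hz (hroots z hQz))
    (fun _ hz => im_derivative_div_nonneg hroots hz.le)
    (ae_continuousWithinAt_derivative_div hQ _) hD x₀ hγ

theorem cauchyMeasure_norm_derivative_div_le_le (hdeg : 1 ≤ Q.natDegree)
    (hroots : ∀ ζ : ℂ, Q.IsRoot ζ → ‖ζ‖ ≤ 1 ∧ 0 ≤ ζ.im) {δ : ℝ} (hδ : 0 < δ) :
    cauchyMeasure 0 1
      {x : ℝ | ‖Q.derivative.eval (x : ℂ) / Q.eval (x : ℂ)‖ ≤ Q.natDegree * δ} ≤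
      ENNReal.ofReal (4 * δ) := by
  have hn : (0 : ℝ) < Q.natDegree := by exact_mod_cast hdeg
  have hQ : Q ≠ 0 := ne_zero_of_natDegree_gt hdeg
  have hbase : Q.natDegree * (1 / 2) ≤ (Q.derivative.eval ⟨0, -1⟩ / Q.eval ⟨0, -1⟩).im :=
    natDegree_mul_le_im_derivative_div
      (fun h => absurd (hroots _ h).2 (by norm_num))
      fun ζ hζ => half_le_im_one_div_neg_I_sub (hroots ζ hζ).1 (hroots ζ hζ).2
  have hweak := im_mul_cauchyMeasure_norm_derivative_div_le hQ (fun ζ hζ => (hroots ζ hζ).2)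
    (mul_pos hn hδ) 0 one_ne_zero
  rw [ENNReal.le_ofReal_iff_toReal_le (measure_ne_top _ _) (by positivity)]
  refine le_of_mul_le_mul_left ?_ (half_pos hn)
  calc _ = Q.natDegree * (1 / 2) * (cauchyMeasure 0 1).real _ := by
        rw [mul_one_div, measureReal_def]
    _ ≤ _ := mul_le_mul_of_nonneg_right hbase measureReal_nonneg
    _ ≤ 2 * (Q.natDegree * δ) := hweak
    _ = Q.natDegree / 2 * (4 * δ) := by ring

theorem volume_norm_derivative_div_le_le (hdeg : 1 ≤ Q.natDegree)
    (hroots : ∀ ζ : ℂ, Q.IsRoot ζ → ‖ζ‖ ≤ 1 ∧ 0 ≤ ζ.im) {δ : ℝ} (hδ : 0 < δ) :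
    volume {x : ℝ | x ∈ Icc (-1) 1 ∧
        ‖Q.derivative.eval (x : ℂ) / Q.eval (x : ℂ)‖ ≤ Q.natDegree * δ} ≤
      ENNReal.ofReal (8 * Real.pi * δ) := by
  calc _ ≤ ENNReal.ofReal (2 * Real.pi * (1 : ℝ≥0)) * cauchyMeasure 0 1 _ :=
        volume_le_mul_cauchyMeasure one_ne_zero fun x hx => by simpa using hx.1
    _ ≤ ENNReal.ofReal (2 * Real.pi * (1 : ℝ≥0)) * ENNReal.ofReal (4 * δ) := by
        gcongr
        exact (measure_mono fun x hx => hx.2).trans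
          (cauchyMeasure_norm_derivative_div_le_le hdeg hroots hδ)
    _ = ENNReal.ofReal (8 * Real.pi * δ) := by
        rw [← ENNReal.ofReal_mul (by positivity), NNReal.coe_one]
        ring_nf

end LogarithmicDerivative

theorem govorov_lapenko (Q : Polynomial ℂ) (n : ℕ) (hn : 1 ≤ n) (hdeg : Q.natDegree = n)
    (hz : ∀ z : ℂ, Q.IsRoot z → ‖z‖ ≤ 1 ∧ 0 ≤ z.im) (δ : ℝ) (hδ : 0 < δ) :
    volume {x : ℝ | x ∈ Icc (-1:ℝ) 1 ∧ Q.eval (x : ℂ) ≠ 0 ∧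
        ‖(Polynomial.derivative Q).eval (x : ℂ) / Q.eval (x : ℂ)‖ ≤ (n : ℝ) * δ} <
      ENNReal.ofReal (70 * Real.exp 1 * δ) := by
  subst hdeg
  calc _ ≤ ENNReal.ofReal (8 * Real.pi * δ) :=
        (measure_mono fun x hx => And.intro hx.1 hx.2.2).trans
          (volume_norm_derivative_div_le_le hn hz hδ)
    _ < ENNReal.ofReal (70 * Real.exp 1 * δ) := by
        rw [ENNReal.ofReal_lt_ofReal_iff (by positivity), mul_lt_mul_iff_left₀ hδ]
        linarith [Real.pi_lt_four, Real.add_one_le_exp 1]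
end

section
/- Let R be a complex polynomial of degree at most k and α > 0. Then the Lebesgue measure of F_α := {x ∈ ℝ : |R'(x)/R(x)| ≥ α} is at most 8√2·k/α. -/
open Polynomial Set MeasureTheory

/-!
On the real line `R'/R` is the sum of `m / (x - w)` over the roots `w` with multiplicity `m`.
Reflecting the roots of the upper half-plane into the lower one keeps the real part of this sum
and can only increase the modulus of its imaginary part, so we may assume that all roots satisfy
`Im w ≤ 0`. Then `p = (i / α) ∑ m / (z - w)` has nonnegative real part on the upper half-plane,
hence so has `f = p / (1 + p)`, and `Re f ≥ 1/2` exactly where `‖p‖ ≥ 1`. As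
`z f z → i deg R / α` at infinity, Cauchy's theorem gives `∫ Re f = π deg R / α` along every
horizontal line of the upper half-plane; Fatou's lemma carries the upper bound to the real line,
and Markov's inequality bounds the measure of the set by `2π deg R / α ≤ 8√2 deg R / α`.
-/

section UpperHalfPlane

open Filter Topology Bornology Complex
open scoped Real

variable {E : Type*} [NormedAddCommGroup E] [NormedSpace ℂ E] {g : ℂ → E} {y T : ℝ}

lemma integral_horizontal_eq_integral_sides (hT : 0 ≤ T)
    (hg : ∀ z : ℂ, y ≤ z.im → DifferentiableAt ℂ g z) :
    ∫ x in -T..T, g (x + y * I) = (∫ x in -T..T, g (x + (y + T : ℝ) * I))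
      - I • (∫ t in y..y + T, g (T + t * I)) + I • ∫ t in y..y + T, g ((-T : ℝ) + t * I) := by
  have cauchy := integral_boundary_rect_eq_zero_of_differentiableOn g
    (⟨-T, y⟩ : ℂ) (⟨T, y + T⟩ : ℂ) fun z hz ↦ (hg z ?_).differentiableWithinAt
  · rw [← sub_eq_zero, ← cauchy]
    abel
  · have him := (mem_reProdIm.1 hz).2
    rw [uIcc_of_le (le_add_of_nonneg_right hT)] at him
    exact him.1

lemma norm_integral_horizontal_le {B : ℝ} (hy : 0 ≤ y) (hT : 0 ≤ T)
    (hg : ∀ z : ℂ, y ≤ z.im → DifferentiableAt ℂ g z)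
    (hB : ∀ z : ℂ, T ≤ ‖z‖ → ‖g z‖ ≤ B) :
    ‖∫ x in -T..T, g (x + y * I)‖ ≤ 4 * T * B := by
  have top : ‖∫ x in -T..T, g (x + (y + T : ℝ) * I)‖ ≤ B * |T - -T| := by
    refine intervalIntegral.norm_integral_le_of_norm_le_const fun x _ ↦ hB _ ?_
    have him : (x + (y + T : ℝ) * I).im = y + T := by simp
    linarith [im_le_norm (x + (y + T : ℝ) * I)]
  have side (r : ℝ) (hr : T ≤ |r|) : ‖∫ t in y..y + T, g (r + t * I)‖ ≤ B * |y + T - y| :=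
    intervalIntegral.norm_integral_le_of_norm_le_const fun t _ ↦ hB _ <|
      hr.trans (by simpa using abs_re_le_norm (r + t * I))
  have right := side T (le_abs_self T)
  have left := side (-T) (by simpa using le_abs_self T)
  rw [sub_neg_eq_add, abs_of_nonneg (by positivity)] at top
  rw [add_sub_cancel_left, abs_of_nonneg hT] at left right
  calc ‖∫ x in -T..T, g (x + y * I)‖
      ≤ ‖∫ x in -T..T, g (x + (y + T : ℝ) * I)‖ + ‖∫ t in y..y + T, g (T + t * I)‖
        + ‖∫ t in y..y + T, g ((-T : ℝ) + t * I)‖ := by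
        rw [integral_horizontal_eq_integral_sides hT hg]
        refine (norm_add_le _ _).trans (add_le_add ((norm_sub_le _ _).trans ?_) ?_) <;>
          simp [norm_smul]
    _ ≤ 4 * T * B := by linarith

lemma tendsto_integral_horizontal_zero (hy : 0 ≤ y)
    (hg : ∀ z : ℂ, y ≤ z.im → DifferentiableAt ℂ g z)
    (hlim : Tendsto (fun z ↦ z • g z) (cobounded ℂ) (𝓝 0)) :
    Tendsto (fun T : ℝ ↦ ∫ x in -T..T, g (x + y * I)) atTop (𝓝 0) := by
  refine Metric.tendsto_nhds.2 fun ε hε ↦ ?_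
  obtain ⟨M, -, hM⟩ := hasBasis_cobounded_norm.eventually_iff.1
    (Metric.tendsto_nhds.1 hlim (ε / 8) (by positivity))
  filter_upwards [eventually_gt_atTop 0, eventually_ge_atTop M] with T hT hMT
  have bound : ‖∫ x in -T..T, g (x + y * I)‖ ≤ 4 * T * (ε / 8 / T) := by
    refine norm_integral_horizontal_le hy hT.le hg fun z hz ↦ ?_
    have hzg : ‖z‖ * ‖g z‖ < ε / 8 := by simpa [norm_smul] using hM (hMT.trans hz)
    rw [le_div_iff₀ hT]
    nlinarith [norm_nonneg (g z)]
  have half : 4 * T * (ε / 8 / T) = ε / 2 := by field_simp; norm_num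
  rw [dist_zero_right]
  linarith

lemma re_I_mul_div_horizontal (a x y : ℝ) :
    (I * a / (x + y * I)).re = a * (y * (x ^ 2 + y ^ 2)⁻¹) := by
  simp only [div_re, normSq_apply, mul_re, mul_im, add_re, add_im, I_re, I_im, ofReal_re, ofReal_im]
  ring

lemma tendsto_integral_poisson (hy : 0 < y) :
    Tendsto (fun T : ℝ ↦ ∫ x in -T..T, y * (x ^ 2 + y ^ 2)⁻¹) atTop (𝓝 π) := by
  have arctan_form (T : ℝ) :
      ∫ x in -T..T, y * (x ^ 2 + y ^ 2)⁻¹ = Real.arctan (T / y) + Real.arctan (T / y) := by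
    simp_rw [add_comm _ (y ^ 2)]
    rw [intervalIntegral.integral_const_mul, integral_inv_sq_add_sq hy.ne', neg_div,
      Real.arctan_neg, sub_neg_eq_add, mul_inv_cancel_left₀ hy.ne']
  have lim : Tendsto (fun T : ℝ ↦ Real.arctan (T / y)) atTop (𝓝 (π / 2)) :=
    (Real.tendsto_arctan_atTop.mono_right nhdsWithin_le_nhds).comp
      (tendsto_id.atTop_div_const hy)
  simpa only [arctan_form, add_halves] using lim.add lim

variable {f : ℂ → ℂ} {a : ℝ}

lemma continuous_horizontal (hf : ∀ z : ℂ, 0 < z.im → DifferentiableAt ℂ f z)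
    (hy : 0 < y) : Continuous fun x : ℝ ↦ f (x + y * I) :=
  continuous_iff_continuousAt.2 fun x ↦
    ContinuousAt.comp (g := f) (hf _ (by simpa using hy)).continuousAt (by fun_prop)

lemma tendsto_integral_re_horizontal (hf : ∀ z : ℂ, 0 < z.im → DifferentiableAt ℂ f z)
    (hlim : Tendsto (fun z ↦ z * f z) (cobounded ℂ) (𝓝 (I * a))) (hy : 0 < y) :
    Tendsto (fun T : ℝ ↦ ∫ x in -T..T, (f (x + y * I)).re) atTop (𝓝 (π * a)) := by
  set g : ℂ → ℂ := fun z ↦ f z - I * a / z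
  have hg (z : ℂ) (hz : 0 < z.im) : DifferentiableAt ℂ g z := by
    have hz0 : z ≠ 0 := by rintro rfl; simp at hz
    have := hf z hz
    fun_prop (disch := assumption)
  have hglim : Tendsto (fun z ↦ z * g z) (cobounded ℂ) (𝓝 0) := by
    refine (sub_self (I * (a : ℂ)) ▸ hlim.sub_const (I * a)).congr' ?_
    filter_upwards [eventually_ne_cobounded 0] with z hz
    simp only [g]
    field_simp
  have hgcont := continuous_horizontal hg hy
  have hgre : Continuous fun x : ℝ ↦ reCLM (g (x + y * I)) := reCLM.continuous.comp hgcont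
  have hpoisson : Continuous fun x : ℝ ↦ a * (y * (x ^ 2 + y ^ 2)⁻¹) := by
    have (x : ℝ) : x ^ 2 + y ^ 2 ≠ 0 := by positivity
    fun_prop (disch := assumption)
  have split (T : ℝ) : ∫ x in -T..T, (f (x + y * I)).re =
      (∫ x in -T..T, g (x + y * I)).re + a * ∫ x in -T..T, y * (x ^ 2 + y ^ 2)⁻¹ := by
    rw [← intervalIntegral.integral_const_mul, ← reCLM_apply,
      ← reCLM.intervalIntegral_comp_comm (hgcont.intervalIntegrable _ _),
      ← intervalIntegral.integral_add (hgre.intervalIntegrable _ _)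
        (hpoisson.intervalIntegrable _ _)]
    simp only [g, reCLM_apply, sub_re, re_I_mul_div_horizontal, sub_add_cancel]
  have main := ((continuous_re.tendsto 0).comp (tendsto_integral_horizontal_zero hy.le
    (fun z hz ↦ hg z (hy.trans_le hz)) hglim)).add ((tendsto_integral_poisson hy).const_mul a)
  simpa only [split, Function.comp_def, zero_re, zero_add, mul_comm π] using main

lemma lintegral_re_horizontal (hf : ∀ z : ℂ, 0 < z.im → DifferentiableAt ℂ f z)
    (hre : ∀ z : ℂ, 0 < z.im → 0 ≤ (f z).re)
    (hlim : Tendsto (fun z ↦ z * f z) (cobounded ℂ) (𝓝 (I * a))) (hy : 0 < y) :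
    ∫⁻ x : ℝ, ENNReal.ofReal (f (x + y * I)).re = ENNReal.ofReal (π * a) := by
  have hcont := continuous_re.comp (continuous_horizontal hf hy)
  have hnonneg (x : ℝ) : 0 ≤ (f (x + y * I)).re := hre _ (by simpa using hy)
  have hlimT := tendsto_integral_re_horizontal hf hlim hy
  have hint : Integrable fun x : ℝ ↦ (f (x + y * I)).re :=
    integrable_of_intervalIntegral_norm_tendsto (π * a) (fun T ↦ hcont.integrableOn_Ioc)
      tendsto_neg_atTop_atBot tendsto_id
      (by simpa only [Real.norm_of_nonneg (hnonneg _), id] using hlimT)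
  rw [← ofReal_integral_eq_lintegral_ofReal hint (ae_of_all _ hnonneg),
    tendsto_nhds_unique (intervalIntegral_tendsto_integral hint tendsto_neg_atTop_atBot tendsto_id)
      hlimT]

lemma lintegral_re_ofReal_le (hf : ∀ z : ℂ, 0 < z.im → DifferentiableAt ℂ f z)
    (hre : ∀ z : ℂ, 0 < z.im → 0 ≤ (f z).re)
    (hlim : Tendsto (fun z ↦ z * f z) (cobounded ℂ) (𝓝 (I * a)))
    (hcont : ∀ᵐ x : ℝ, ContinuousAt f x) :
    ∫⁻ x : ℝ, ENNReal.ofReal (f x).re ≤ ENNReal.ofReal (π * a) := by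
  let y (n : ℕ) : ℝ := 1 / (n + 1)
  have hy (n : ℕ) : 0 < y n := Nat.one_div_pos_of_nat
  have approach (x : ℝ) : Tendsto (fun n ↦ x + y n * I) atTop (𝓝 (x : ℂ)) := by
    simpa [y] using ((((continuous_ofReal.tendsto 0).comp
      tendsto_one_div_add_atTop_nhds_zero_nat).mul_const I).const_add (x : ℂ))
  have pointwise : ∀ᵐ x : ℝ, ENNReal.ofReal (f x).re =
      liminf (fun n ↦ ENNReal.ofReal (f (x + y n * I)).re) atTop := by
    filter_upwards [hcont] with x hx
    exact (ENNReal.tendsto_ofReal ((continuous_re.tendsto _).comp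
      (hx.tendsto.comp (approach x)))).liminf_eq.symm
  calc ∫⁻ x : ℝ, ENNReal.ofReal (f x).re
      = ∫⁻ x : ℝ, liminf (fun n ↦ ENNReal.ofReal (f (x + y n * I)).re) atTop :=
        lintegral_congr_ae pointwise
    _ ≤ liminf (fun n ↦ ∫⁻ x : ℝ, ENNReal.ofReal (f (x + y n * I)).re) atTop :=
        lintegral_liminf_le fun n ↦ ENNReal.measurable_ofReal.comp
          (continuous_re.comp (continuous_horizontal hf (hy n))).measurable
    _ = ENNReal.ofReal (π * a) := by
        simp only [lintegral_re_horizontal hf hre hlim (hy _), liminf_const]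

lemma one_add_ne_zero_of_re_nonneg {p : ℂ} (hp : 0 ≤ p.re) : 1 + p ≠ 0 := fun h ↦ by
  have := congrArg re h
  simp only [add_re, one_re, zero_re] at this
  linarith

lemma re_div_one_add (p : ℂ) :
    (p / (1 + p)).re = (‖p‖ ^ 2 + p.re) / (‖p‖ ^ 2 + 2 * p.re + 1) := by
  rw [div_re, ← add_div, Complex.sq_norm]
  congr 1 <;> simp only [normSq_apply, add_re, add_im, one_re, one_im] <;> ring

lemma re_div_one_add_nonneg {p : ℂ} (hp : 0 ≤ p.re) : 0 ≤ (p / (1 + p)).re := by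
  rw [re_div_one_add]
  positivity

lemma half_le_re_div_one_add_iff {p : ℂ} (hp : 0 ≤ p.re) :
    1 / 2 ≤ (p / (1 + p)).re ↔ 1 ≤ ‖p‖ := by
  rw [re_div_one_add, le_div_iff₀ (by positivity), ← one_le_sq_iff₀ (norm_nonneg p)]
  constructor <;> intro h <;> linarith

lemma tendsto_mul_div_one_add {p : ℂ → ℂ} {c : ℂ}
    (hlim : Tendsto (fun z ↦ z * p z) (cobounded ℂ) (𝓝 c)) :
    Tendsto (fun z ↦ z * (p z / (1 + p z))) (cobounded ℂ) (𝓝 c) := by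
  have hp : Tendsto p (cobounded ℂ) (𝓝 0) := by
    refine (zero_mul c ▸ tendsto_inv₀_cobounded.mul hlim).congr' ?_
    filter_upwards [eventually_ne_cobounded 0] with z hz
    exact inv_mul_cancel_left₀ hz _
  simpa [mul_div_assoc, Pi.div_def] using hlim.div (hp.const_add 1) (by simp)

theorem volume_one_le_norm_le {p : ℂ → ℂ} (hp : ∀ z : ℂ, 0 < z.im → DifferentiableAt ℂ p z)
    (hre : ∀ z : ℂ, 0 ≤ z.im → 0 ≤ (p z).re)
    (hlim : Tendsto (fun z ↦ z * p z) (cobounded ℂ) (𝓝 (I * a)))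
    (hmeas : Measurable p) (hcont : ∀ᵐ x : ℝ, ContinuousAt p x) :
    volume {x : ℝ | 1 ≤ ‖p x‖} ≤ ENNReal.ofReal (2 * π * a) := by
  have hre_real (x : ℝ) : 0 ≤ (p x).re := hre x (by simp)
  have integral_le : ∫⁻ x : ℝ, ENNReal.ofReal (p x / (1 + p x)).re ≤ ENNReal.ofReal (π * a) := by
    refine lintegral_re_ofReal_le (f := fun z ↦ p z / (1 + p z)) (fun z hz ↦ ?_)
      (fun z hz ↦ re_div_one_add_nonneg (hre z hz.le)) (tendsto_mul_div_one_add hlim) ?_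
    · exact (hp z hz).div ((hp z hz).const_add 1) (one_add_ne_zero_of_re_nonneg (hre z hz.le))
    · filter_upwards [hcont] with x hx
      exact hx.div (hx.const_add 1) (one_add_ne_zero_of_re_nonneg (hre_real x))
  calc volume {x : ℝ | 1 ≤ ‖p x‖}
      = volume {x : ℝ | ENNReal.ofReal (1 / 2) ≤ ENNReal.ofReal (p x / (1 + p x)).re} := by
        simp only [ENNReal.ofReal_le_ofReal_iff (re_div_one_add_nonneg (hre_real _)),
          half_le_re_div_one_add_iff (hre_real _)]
    _ ≤ (∫⁻ x : ℝ, ENNReal.ofReal (p x / (1 + p x)).re) / ENNReal.ofReal (1 / 2) :=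
        meas_ge_le_lintegral_div (by fun_prop) (by simp) (by simp)
    _ ≤ ENNReal.ofReal (π * a) / ENNReal.ofReal (1 / 2) := by gcongr
    _ = ENNReal.ofReal (2 * π * a) := by
        rw [← ENNReal.ofReal_div_of_pos (by norm_num)]
        ring_nf

end UpperHalfPlane

section PoleSum

open Filter Topology Bornology Complex
open scoped Real

variable {ι : Type*} {t : Finset ι} {c : ι → ℝ} {w : ι → ℂ}

lemma re_ofReal_div (r : ℝ) (z : ℂ) : (r / z).re = r * z.re / normSq z := by
  simp [div_re]

lemma im_ofReal_div (r : ℝ) (z : ℂ) : (r / z).im = -(r * z.im / normSq z) := by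
  simp [div_im]

lemma im_sum_div_sub_nonpos (hc : ∀ i ∈ t, 0 ≤ c i) (hw : ∀ i ∈ t, (w i).im ≤ 0) {z : ℂ}
    (hz : 0 ≤ z.im) : (∑ i ∈ t, (c i : ℂ) / (z - w i)).im ≤ 0 := by
  rw [im_sum]
  refine Finset.sum_nonpos fun i hi ↦ ?_
  have him : 0 ≤ (z - w i).im := by simpa using (hw i hi).trans hz
  rw [im_ofReal_div, neg_nonpos]
  exact div_nonneg (mul_nonneg (hc i hi) him) (normSq_nonneg _)

lemma differentiableAt_sum_div_sub {z : ℂ} (hz : ∀ i ∈ t, z ≠ w i) :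
    DifferentiableAt ℂ (fun z ↦ ∑ i ∈ t, (c i : ℂ) / (z - w i)) z :=
  .fun_sum fun i hi ↦ by
    have := sub_ne_zero.2 (hz i hi)
    fun_prop (disch := assumption)

lemma ae_differentiableAt_sum_div_sub (t : Finset ι) (c : ι → ℝ) (w : ι → ℂ) :
    ∀ᵐ x : ℝ, DifferentiableAt ℂ (fun z ↦ ∑ i ∈ t, (c i : ℂ) / (z - w i)) x := by
  have off_poles : ∀ᵐ x : ℝ, ∀ i ∈ t, x ≠ (w i).re :=
    (ae_ball_iff t.countable_toSet).2 fun i _ ↦ Measure.ae_ne volume (w i).re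
  filter_upwards [off_poles] with x hx
  exact differentiableAt_sum_div_sub fun i hi h ↦ hx i hi (by simp [← h])

lemma tendsto_mul_sum_div_sub (t : Finset ι) (c : ι → ℝ) (w : ι → ℂ) :
    Tendsto (fun z ↦ z * ∑ i ∈ t, (c i : ℂ) / (z - w i)) (cobounded ℂ)
      (𝓝 ((∑ i ∈ t, c i : ℝ) : ℂ)) := by
  have term (i : ι) : Tendsto (fun z ↦ z * ((c i : ℂ) / (z - w i))) (cobounded ℂ) (𝓝 (c i)) := by
    have decay : Tendsto (fun z ↦ (z - w i)⁻¹) (cobounded ℂ) (𝓝 0) :=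
      tendsto_inv₀_cobounded.comp (tendsto_sub_const_cobounded (w i))
    have lim := (decay.const_mul ((c i : ℂ) * w i)).const_add (c i : ℂ)
    rw [mul_zero, add_zero] at lim
    refine lim.congr' ?_
    filter_upwards [eventually_ne_cobounded (w i)] with z hz
    have := sub_ne_zero.2 hz
    field_simp
    ring
  simpa only [Finset.mul_sum, ofReal_sum] using tendsto_finsetSum t fun i _ ↦ term i

lemma volume_le_norm_sum_div_sub_le_of_im_nonpos (hc : ∀ i ∈ t, 0 ≤ c i)
    (hw : ∀ i ∈ t, (w i).im ≤ 0) {α : ℝ} (hα : 0 < α) :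
    volume {x : ℝ | α ≤ ‖∑ i ∈ t, (c i : ℂ) / (x - w i)‖} ≤
      ENNReal.ofReal (2 * π * (∑ i ∈ t, c i) / α) := by
  set F : ℂ → ℂ := fun z ↦ ∑ i ∈ t, (c i : ℂ) / (z - w i)
  have hdiff (z : ℂ) (hz : 0 < z.im) : DifferentiableAt ℂ F z :=
    differentiableAt_sum_div_sub fun i hi h ↦ ((hw i hi).trans_lt (h ▸ hz)).false
  have hre (z : ℂ) (hz : 0 ≤ z.im) : 0 ≤ (I * F z / α).re := by
    rw [div_ofReal_re, I_mul_re]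
    exact div_nonneg (neg_nonneg.2 (im_sum_div_sub_nonpos hc hw hz)) hα.le
  have hlim : Tendsto (fun z ↦ z * (I * F z / α)) (cobounded ℂ)
      (𝓝 (I * ((∑ i ∈ t, c i) / α : ℝ))) := by
    convert (tendsto_mul_sum_div_sub t c w).const_mul (I / (α : ℂ)) using 2
    · ring
    · push_cast
      ring
  have hcont : ∀ᵐ x : ℝ, ContinuousAt (fun z ↦ I * F z / α) x := by
    filter_upwards [ae_differentiableAt_sum_div_sub t c w] with x hx
    exact (hx.continuousAt.const_mul I).div_const _
  have bound := volume_one_le_norm_le (p := fun z ↦ I * F z / α)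
    (fun z hz ↦ ((hdiff z hz).const_mul I).div_const _) hre hlim (by fun_prop) hcont
  simpa [F, abs_of_pos hα, one_le_div hα, mul_div_assoc] using bound

/-- The reflection `Re w - |Im w| i` of the upper half-plane into the lower one; it moves the poles
of a sum `∑ c / (z - w)` out of the upper half-plane. -/
def lowerReflect (w : ℂ) : ℂ := ⟨w.re, -|w.im|⟩

lemma lowerReflect_re (w : ℂ) : (lowerReflect w).re = w.re := rfl

lemma lowerReflect_im (w : ℂ) : (lowerReflect w).im = -|w.im| := rfl

lemma normSq_ofReal_sub_lowerReflect (x : ℝ) (w : ℂ) :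
    normSq (x - lowerReflect w) = normSq (x - w) := by
  simp [lowerReflect_re, lowerReflect_im, normSq_apply]

lemma norm_sum_div_sub_le_norm_sum_div_sub_lowerReflect (hc : ∀ i ∈ t, 0 ≤ c i) (x : ℝ) :
    ‖∑ i ∈ t, (c i : ℂ) / (x - w i)‖ ≤
      ‖∑ i ∈ t, (c i : ℂ) / (x - lowerReflect (w i))‖ := by
  have hre : (∑ i ∈ t, (c i : ℂ) / (x - lowerReflect (w i))).re =
      (∑ i ∈ t, (c i : ℂ) / (x - w i)).re := by
    simp only [re_sum, re_ofReal_div, normSq_ofReal_sub_lowerReflect, sub_re, lowerReflect_re]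
  have him : |(∑ i ∈ t, (c i : ℂ) / (x - w i)).im| ≤
      |(∑ i ∈ t, (c i : ℂ) / (x - lowerReflect (w i))).im| := by
    simp only [im_sum, im_ofReal_div, normSq_ofReal_sub_lowerReflect, Finset.sum_neg_distrib,
      abs_neg]
    refine (Finset.abs_sum_le_sum_abs _ _).trans
      ((Finset.sum_le_sum fun i hi ↦ ?_).trans (le_abs_self _))
    simp [lowerReflect_im, abs_div, abs_mul, abs_of_nonneg (hc i hi),
      abs_of_nonneg (normSq_nonneg _)]
  rw [← sq_le_sq₀ (norm_nonneg _) (norm_nonneg _), Complex.sq_norm, Complex.sq_norm,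
    normSq_apply, normSq_apply, hre]
  gcongr _ + ?_
  exact abs_le_iff_mul_self_le.1 him

theorem volume_le_norm_sum_div_sub_le (hc : ∀ i ∈ t, 0 ≤ c i) {α : ℝ} (hα : 0 < α) :
    volume {x : ℝ | α ≤ ‖∑ i ∈ t, (c i : ℂ) / (x - w i)‖} ≤
      ENNReal.ofReal (2 * π * (∑ i ∈ t, c i) / α) :=
  (measure_mono fun x hx ↦ le_trans (α := ℝ) hx
    (norm_sum_div_sub_le_norm_sum_div_sub_lowerReflect hc x)).trans
    (volume_le_norm_sum_div_sub_le_of_im_nonpos hc (fun i _ ↦ by simp [lowerReflect_im]) hα)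

end PoleSum

lemma eval_derivative_div_eval_eq_sum_rootMultiplicity {K : Type*} [Field K] [DecidableEq K]
    {P : K[X]} (hP : P.Splits) {z : K} (hz : P.eval z ≠ 0) :
    P.derivative.eval z / P.eval z =
      ∑ w ∈ P.roots.toFinset, (P.rootMultiplicity w : K) / (z - w) := by
  rw [hP.eval_derivative_div_eval_of_ne_zero hz, Finset.sum_multiset_map_count]
  simp only [count_roots, nsmul_eq_mul, mul_one_div]

lemma sum_rootMultiplicity_le_natDegree {A : Type*} [CommRing A] [IsDomain A] [DecidableEq A]
    (P : A[X]) : ∑ w ∈ P.roots.toFinset, P.rootMultiplicity w ≤ P.natDegree := by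
  simpa only [← count_roots, Multiset.toFinset_sum_count_eq] using P.card_roots'

theorem volume_le_norm_eval_derivative_div_eval_le (P : ℂ[X]) {α : ℝ} (hα : 0 < α) :
    volume {x : ℝ | P.eval (x : ℂ) ≠ 0 ∧ α ≤ ‖P.derivative.eval (x : ℂ) / P.eval (x : ℂ)‖} ≤
      ENNReal.ofReal (2 * Real.pi * P.natDegree / α) := by
  classical
  have bound := volume_le_norm_sum_div_sub_le (t := P.roots.toFinset)
    (c := fun w ↦ P.rootMultiplicity w) (w := id) (fun w _ ↦ Nat.cast_nonneg _) hα
  refine (measure_mono ?_).trans (bound.trans (ENNReal.ofReal_le_ofReal ?_))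
  · rintro x ⟨hx, hαx⟩
    rw [eval_derivative_div_eval_eq_sum_rootMultiplicity (IsAlgClosed.splits P) hx] at hαx
    simpa using hαx
  · gcongr
    exact_mod_cast sum_rootMultiplicity_le_natDegree P

theorem log_deriv_large_set (R : Polynomial ℂ) (k : ℕ) (hR : R ≠ 0) (hdeg : R.natDegree ≤ k)
    (α : ℝ) (hα : 0 < α) :
    volume {x : ℝ | R.eval (x : ℂ) ≠ 0 ∧
        α ≤ ‖(Polynomial.derivative R).eval (x : ℂ) / R.eval (x : ℂ)‖} ≤
      ENNReal.ofReal (8 * Real.sqrt 2 * (k : ℝ) / α) := by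
  have two_pi_le : 2 * Real.pi ≤ 8 * √2 := by
    linarith [Real.pi_le_four, Real.one_le_sqrt.2 one_le_two]
  refine (volume_le_norm_eval_derivative_div_eval_le R hα).trans (ENNReal.ofReal_le_ofReal ?_)
  gcongr
end

section
/- There exist absolute constants c₁, c₂ > 0 such that for all integers 0 ≤ k ≤ n, c₁·(n/(k+1))^{1/2} ≤ inf_P ‖P'‖_{[-1,1]} / ‖P‖_{[-1,1]} ≤ c₂·(n/(k+1))^{1/2}, where the infimum is over all nonzero P ∈ 𝓕_{n,k}^c having at least one zero in [-1,1]. -/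
open Polynomial Set
open scoped Classical

/-
Lower bound. Let `M = ‖P‖` and `M' = ‖P'‖`. Near a point where `|P| = M`, on the side of the given
zero, lies an interval of length `M / (2 M')` in `[-1, 1]` on which `|P| ≥ M / 2`. After rescaling
it to `[-1, 1]`, the logarithmic derivative `∑ 1 / (x - z)` is bounded there by an absolute
constant. Substituting `x = (w + w⁻¹) / 2` and integrating over the unit circle against a suitable
polynomial, Cauchy's formula turns this sum into one over the preimages `ζ` of the zeros in the
unit disc; there a zero in the upper half-plane contributes real part at least a multiple of
`|ζ|²`, hence of `(M / M')²`, and the at most `k` other zeros contribute a bounded amount each.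
Therefore `n (M / M')²` is at most a multiple of `k + 1`.

Upper bound. The polynomial `F_K(x) = ∑_{i ≤ K} C(m + i, i) xⁱ (1 - x)ᵐ⁺¹` is a negative binomial
distribution function, so it takes values in `[0, 1]`, and `x F_K(x) ≤ (K + 1) / (m + 1)`. Its
derivative telescopes to a single term, so the derivative of the average of `F_0, …, F_K` is at most
a multiple of `(m / K) F_K`. Evaluating the average at `x²` gives a polynomial with zeros of high
order at `±1`, with value `1` at `0` and with derivative at most a multiple of `√(m / K)`.
-/

section Joukowski

/-- The Joukowski map `ζ ↦ (ζ + ζ⁻¹) / 2`. It maps the punctured open unit disc onto the complement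
of `[-1, 1]` and the unit circle onto `[-1, 1]`. -/
noncomputable def joukowski (ζ : ℂ) : ℂ := (ζ + ζ⁻¹) / 2

lemma joukowski_inv (ζ : ℂ) : joukowski ζ⁻¹ = joukowski ζ := by
  rw [joukowski, joukowski, inv_inv, add_comm]

lemma joukowski_of_norm_eq_one {w : ℂ} (hw : ‖w‖ = 1) : joukowski w = w.re := by
  rw [joukowski, Complex.re_eq_add_conj, Complex.inv_eq_conj hw]

lemma joukowski_sub_joukowski {w ζ : ℂ} (hw : w ≠ 0) (hζ : ζ ≠ 0) :
    joukowski w - joukowski ζ = (w - ζ) * (w - ζ⁻¹) / (2 * w) := by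
  unfold joukowski
  field_simp
  ring

lemma joukowski_im (ζ : ℂ) : (joukowski ζ).im = ζ.im * (1 - (‖ζ‖ ^ 2)⁻¹) / 2 := by
  have hdiv : (joukowski ζ).im = (ζ + ζ⁻¹).im / 2 := Complex.div_ofNat_im _ 2
  rw [hdiv, Complex.add_im, Complex.inv_im, Complex.normSq_eq_norm_sq]
  ring

lemma im_nonpos_of_joukowski_im_nonneg {ζ : ℂ} (hζ₀ : ζ ≠ 0) (hζ₁ : ‖ζ‖ < 1)
    (him : 0 ≤ (joukowski ζ).im) : ζ.im ≤ 0 := by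
  have hfactor : 1 - (‖ζ‖ ^ 2)⁻¹ < 0 :=
    sub_neg.2 <| (one_lt_inv₀ (by positivity)).2 (pow_lt_one₀ (norm_nonneg ζ) hζ₁ two_ne_zero)
  rw [joukowski_im] at him
  by_contra! hpos
  linarith [mul_neg_of_pos_of_neg hpos hfactor]

lemma inv_norm_le_two_mul_norm_joukowski_add (ζ : ℂ) : ‖ζ‖⁻¹ ≤ 2 * ‖joukowski ζ‖ + ‖ζ‖ := by
  calc ‖ζ‖⁻¹ = ‖2 * joukowski ζ - ζ‖ := by rw [← norm_inv, joukowski]; ring_nf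
    _ ≤ ‖2 * joukowski ζ‖ + ‖ζ‖ := norm_sub_le _ _
    _ = 2 * ‖joukowski ζ‖ + ‖ζ‖ := by rw [norm_mul, Complex.norm_ofNat]

lemma exists_joukowski_eq (z : ℂ) : ∃ ζ ≠ 0, joukowski ζ = z := by
  obtain ⟨s, hs⟩ := IsAlgClosed.exists_pow_nat_eq (z ^ 2 - 1) (n := 2) two_pos
  have hmul : (z + s) * (z - s) = 1 := by linear_combination -hs
  refine ⟨z + s, left_ne_zero_of_mul_eq_one hmul, ?_⟩
  rw [joukowski, inv_eq_of_mul_eq_one_right hmul]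
  ring

lemma surjOn_joukowski :
    SurjOn joukowski (Metric.ball 0 1 \ {0}) (Complex.ofReal '' Icc (-1) 1)ᶜ := by
  intro z hz
  obtain ⟨ζ, hζ₀, rfl⟩ := exists_joukowski_eq z
  have hne : ‖ζ‖ ≠ 1 := fun h =>
    hz ⟨ζ.re, abs_le.1 (h ▸ Complex.abs_re_le_norm ζ), (joukowski_of_norm_eq_one h).symm⟩
  rcases hne.lt_or_gt with hlt | hgt
  · exact ⟨ζ, by simpa using ⟨hlt, hζ₀⟩, rfl⟩
  · exact ⟨ζ⁻¹, by simpa using ⟨inv_lt_one_of_one_lt₀ hgt, hζ₀⟩, joukowski_inv ζ⟩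

/-- The kernel `w J'(w) / (J(w) - J(ζ))`, where `J` is the Joukowski map. It has residue `ζ` at its
only pole in the open unit disc. -/
noncomputable def joukowskiKernel (ζ w : ℂ) : ℂ :=
  (w - w⁻¹) / 2 * (1 / (joukowski w - joukowski ζ))

lemma joukowskiKernel_eq {w ζ : ℂ} (hw : w ≠ 0) (hζ : ζ ≠ 0) :
    joukowskiKernel ζ w = (w - ζ)⁻¹ * ((w ^ 2 - 1) / (w - ζ⁻¹)) := by
  have hnum : (w - w⁻¹) / 2 * (2 * w) = w ^ 2 - 1 := by field_simp
  rw [joukowskiKernel, joukowski_sub_joukowski hw hζ, one_div_div, ← mul_div_assoc, hnum,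
    ← div_div, div_right_comm, div_eq_inv_mul]

lemma sub_inv_ne_zero_of_mem_closedBall {ζ w : ℂ} (hζ : ζ ∈ Metric.ball (0 : ℂ) 1 \ {0})
    (hw : w ∈ Metric.closedBall (0 : ℂ) 1) : w - ζ⁻¹ ≠ 0 := by
  rw [mem_closedBall_zero_iff] at hw
  rintro h
  rw [sub_eq_zero.1 h, norm_inv] at hw
  exact hw.not_gt ((one_lt_inv₀ (norm_pos_iff.2 hζ.2)).2 (mem_ball_zero_iff.1 hζ.1))

lemma circleIntegrable_mul_joukowskiKernel {T : ℂ → ℂ} (hT : ContinuousOn T (Metric.sphere 0 1))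
    {ζ : ℂ} (hζ : ζ ∈ Metric.ball (0 : ℂ) 1 \ {0}) :
    CircleIntegrable (fun w => T w * joukowskiKernel ζ w) 0 1 := by
  have hkernel : ContinuousOn (joukowskiKernel ζ) (Metric.sphere 0 1) := by
    have hcont : ContinuousOn (fun w => (w - ζ)⁻¹ * ((w ^ 2 - 1) / (w - ζ⁻¹)))
        (Metric.sphere 0 1) := by
      refine .mul (.inv₀ (by fun_prop) fun w hw h => ?_) (.div (by fun_prop) (by fun_prop)
        fun w hw => sub_inv_ne_zero_of_mem_closedBall hζ (Metric.sphere_subset_closedBall hw))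
      rw [sub_eq_zero.1 h] at hw
      exact Metric.sphere_disjoint_ball.ne_of_mem hw hζ.1 rfl
    exact hcont.congr fun w hw =>
      joukowskiKernel_eq (ne_zero_of_mem_unit_sphere ⟨w, hw⟩) hζ.2
  exact (hT.mul hkernel).circleIntegrable zero_le_one

lemma circleIntegral_mul_joukowskiKernel {T : ℂ → ℂ}
    (hT : DifferentiableOn ℂ T (Metric.closedBall 0 1))
    {ζ : ℂ} (hζ : ζ ∈ Metric.ball (0 : ℂ) 1 \ {0}) :
    (∮ w in C(0, 1), T w * joukowskiKernel ζ w) = (2 * Real.pi * Complex.I) * (ζ * T ζ) := by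
  have hdiff : DifferentiableOn ℂ (fun w => T w * ((w ^ 2 - 1) / (w - ζ⁻¹)))
      (Metric.closedBall 0 1) :=
    hT.mul (.div (by fun_prop) (by fun_prop) fun w hw => sub_inv_ne_zero_of_mem_closedBall hζ hw)
  have hvalue : (ζ ^ 2 - 1) / (ζ - ζ⁻¹) = ζ := by
    have hζ₀ : ζ ≠ 0 := hζ.2
    rw [div_eq_iff (sub_inv_ne_zero_of_mem_closedBall hζ (Metric.ball_subset_closedBall hζ.1))]
    field_simp
  calc (∮ w in C(0, 1), T w * joukowskiKernel ζ w)
      = ∮ w in C(0, 1), (w - ζ)⁻¹ • (T w * ((w ^ 2 - 1) / (w - ζ⁻¹))) := by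
        refine circleIntegral.integral_congr zero_le_one fun w hw => ?_
        simp only [joukowskiKernel_eq (ne_zero_of_mem_unit_sphere ⟨w, hw⟩) hζ.2, smul_eq_mul,
          mul_left_comm]
    _ = (2 * Real.pi * Complex.I) * (ζ * T ζ) := by
        rw [hdiff.circleIntegral_sub_inv_smul hζ.1, hvalue, smul_eq_mul, mul_comm ζ]

lemma circleIntegral_sum_map {ι : Type*} {s : Multiset ι} {f : ι → ℂ → ℂ} {c : ℂ} {R : ℝ}
    (hf : ∀ i ∈ s, CircleIntegrable (f i) c R) :
    (∮ w in C(c, R), (s.map fun i => f i w).sum) = (s.map fun i => ∮ w in C(c, R), f i w).sum := by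
  simp only [Finset.sum_multiset_map_count, nsmul_eq_mul, ← circleIntegral.integral_const_mul]
  exact circleIntegral.integral_fun_sum fun i hi =>
    (hf i (Multiset.mem_toFinset.1 hi)).const_smul (a := (s.count i : ℂ))

lemma circleIntegral_mul_sum_joukowskiKernel {T : ℂ → ℂ}
    (hT : DifferentiableOn ℂ T (Metric.closedBall 0 1))
    (s : Multiset ℂ) (hs : ∀ ζ ∈ s, ζ ∈ Metric.ball (0 : ℂ) 1 \ {0}) :
    (∮ w in C(0, 1), T w * (s.map fun ζ => joukowskiKernel ζ w).sum) =
      (2 * Real.pi * Complex.I) * (s.map fun ζ => ζ * T ζ).sum := by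
  have hint : ∀ ζ ∈ s, CircleIntegrable (fun w => T w * joukowskiKernel ζ w) 0 1 := fun ζ hζ =>
    circleIntegrable_mul_joukowskiKernel
      (hT.continuousOn.mono Metric.sphere_subset_closedBall) (hs ζ hζ)
  simp only [← Multiset.sum_map_mul_left]
  rw [circleIntegral_sum_map hint]
  exact congrArg Multiset.sum (Multiset.map_congr rfl fun ζ hζ =>
    circleIntegral_mul_joukowskiKernel hT (hs ζ hζ))

lemma norm_sum_mul_le_of_norm_sum_one_div_sub_joukowski_le {T : ℂ → ℂ} {A B : ℝ}
    (hT : DifferentiableOn ℂ T (Metric.closedBall 0 1))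
    (hA : ∀ w ∈ Metric.sphere (0 : ℂ) 1, ‖T w‖ ≤ A)
    (s : Multiset ℂ) (hs : ∀ ζ ∈ s, ζ ∈ Metric.ball (0 : ℂ) 1 \ {0})
    (hB : ∀ x ∈ Icc (-1 : ℝ) 1, ‖(s.map fun ζ => 1 / ((x : ℂ) - joukowski ζ)).sum‖ ≤ B) :
    ‖(s.map fun ζ => ζ * T ζ).sum‖ ≤ A * B := by
  have hbound : ∀ w ∈ Metric.sphere (0 : ℂ) 1,
      ‖T w * (s.map fun ζ => joukowskiKernel ζ w).sum‖ ≤ A * B := by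
    intro w hw
    have hw₁ : ‖w‖ = 1 := mem_sphere_zero_iff_norm.1 hw
    have hhalf : ‖(w - w⁻¹) / 2‖ ≤ 1 := by
      calc ‖(w - w⁻¹) / 2‖ ≤ (‖w‖ + ‖w⁻¹‖) / 2 := by
            rw [norm_div, Complex.norm_ofNat]; gcongr; exact norm_sub_le _ _
        _ = 1 := by rw [norm_inv, hw₁]; norm_num
    have hsum := hB w.re (abs_le.1 (hw₁ ▸ Complex.abs_re_le_norm w))
    simp only [joukowskiKernel, joukowski_of_norm_eq_one hw₁, Multiset.sum_map_mul_left, norm_mul]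
    calc _ ≤ A * (1 * B) := by gcongr; exacts [(norm_nonneg _).trans (hA w hw), hA w hw]
      _ = A * B := by rw [one_mul]
  have hcauchy := circleIntegral.norm_two_pi_i_inv_smul_integral_le_of_norm_le_const
    zero_le_one hbound
  rwa [circleIntegral_mul_sum_joukowskiKernel hT s hs, smul_eq_mul, one_mul,
    inv_mul_cancel_left₀ Complex.two_pi_I_ne_zero] at hcauchy

end Joukowski

section ZeroCounting

/-- The function tested against the logarithmic derivative. Its coefficients are chosen so that
`ζ * testFunction ζ` has positive real part on the lower half of the unit disc: with `ζ = x - i y`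
that real part is `x² - y² + 3 y (1 - |ζ|²) + 4 y³`. -/
noncomputable def testFunction (ζ : ℂ) : ℂ := ζ + Complex.I * (3 - ζ ^ 2)

lemma differentiable_testFunction : Differentiable ℂ testFunction := by
  unfold testFunction
  fun_prop

lemma norm_testFunction_le {ζ : ℂ} (hζ : ‖ζ‖ ≤ 1) : ‖testFunction ζ‖ ≤ 5 := by
  calc ‖testFunction ζ‖ ≤ ‖ζ‖ + ‖3 - ζ ^ 2‖ :=
        (norm_add_le _ _).trans_eq (by rw [norm_mul, Complex.norm_I, one_mul])
    _ ≤ ‖ζ‖ + (3 + ‖ζ‖ ^ 2) := by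
        gcongr
        exact (norm_sub_le _ _).trans_eq (by rw [norm_pow, Complex.norm_ofNat])
    _ ≤ 1 + (3 + 1 ^ 2) := by gcongr
    _ = 5 := by norm_num

lemma re_mul_testFunction (ζ : ℂ) : (ζ * testFunction ζ).re =
    ζ.re ^ 2 - ζ.im ^ 2 - 3 * ζ.im * (1 - (ζ.re ^ 2 + ζ.im ^ 2)) - 4 * ζ.im ^ 3 := by
  simp only [testFunction, pow_succ, pow_zero, one_mul, Complex.mul_re, Complex.add_re,
    Complex.I_re, Complex.sub_re, Complex.re_ofNat, zero_mul, Complex.I_im, Complex.sub_im,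
    Complex.im_ofNat, Complex.mul_im, zero_sub, neg_add_rev, neg_neg, Complex.add_im, zero_add]
  ring

lemma half_mul_norm_sq_le_re_mul_testFunction {ζ : ℂ} (hζ : ‖ζ‖ ≤ 1) (him : ζ.im ≤ 0) :
    1 / 2 * ‖ζ‖ ^ 2 ≤ (ζ * testFunction ζ).re := by
  obtain ⟨x, y⟩ := ζ
  have hsq : ‖(⟨x, y⟩ : ℂ)‖ ^ 2 = x ^ 2 + y ^ 2 := by
    rw [Complex.sq_norm, Complex.normSq_mk]; ring
  have hle : x ^ 2 + y ^ 2 ≤ 1 := hsq ▸ pow_le_one₀ (norm_nonneg _) hζ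
  rw [re_mul_testFunction, hsq]
  simp only at him ⊢
  -- The difference of the two sides is affine in `x²`, so it suffices to look at `x² = 0` and
  -- `x² = 1 - y²`.
  rcases le_total (-1 / 6) y with hy | hy
  · nlinarith [mul_nonneg (sq_nonneg x) (by linarith : 0 ≤ 1 / 2 + 3 * y), sq_nonneg y]
  · have hend : 0 ≤ 1 / 2 - 2 * y ^ 2 - 4 * y ^ 3 := by
      nlinarith [mul_nonneg (neg_nonneg.2 him) (sq_nonneg (y + 1 / 3)), sq_nonneg (y + 1 / 3)]
    nlinarith [mul_nonneg (sub_nonneg.2 hle) (by linarith : 0 ≤ -3 * y - 1 / 2)]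

lemma le_sum_map_of_countP {α : Type*} (s : Multiset α) (p : α → Prop) [DecidablePred p]
    (f : α → ℝ) {c C : ℝ}
    (hc : ∀ a ∈ s, p a → c ≤ f a) (hC : ∀ a ∈ s, -C ≤ f a) :
    s.countP p * c - (s.card - s.countP p) * C ≤ (s.map f).sum := by
  have hgood : s.countP p * c ≤ ((s.filter p).map f).sum := by
    simpa [Multiset.countP_eq_card_filter] using
      Multiset.card_nsmul_le_sum (s := (s.filter p).map f) (a := c)
        (Multiset.forall_mem_map_iff.2 fun a ha =>
          hc a (Multiset.mem_of_mem_filter ha) (Multiset.of_mem_filter ha))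
  have hbad : (s.card - s.countP p) * -C ≤ ((s.filter (¬p ·)).map f).sum := by
    have hcard : ((s.filter (¬p ·)).card : ℝ) = s.card - s.countP p := by
      rw [← Multiset.countP_eq_card_filter, s.card_eq_countP_add_countP p]
      push_cast
      ring
    simpa [← hcard] using
      Multiset.card_nsmul_le_sum (s := (s.filter (¬p ·)).map f) (a := -C)
        (Multiset.forall_mem_map_iff.2 fun a ha => hC a (Multiset.mem_of_mem_filter ha))
  calc _ = s.countP p * c + (s.card - s.countP p) * -C := by ring
    _ ≤ ((s.filter p).map f).sum + ((s.filter (¬p ·)).map f).sum := add_le_add hgood hbad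
    _ = (s.map f).sum := by
        rw [← Multiset.sum_add, ← Multiset.map_add, Multiset.filter_add_not]

lemma exists_multiset_map_eq_of_surjOn {α β : Type*} {f : α → β} {A : Set α} {B : Set β}
    (hf : SurjOn f A B) {t : Multiset β} (ht : ∀ b ∈ t, b ∈ B) :
    ∃ s : Multiset α, (∀ a ∈ s, a ∈ A) ∧ s.map f = t := by
  have hlift : CanLift β A (fun a => f a) (· ∈ B) :=
    ⟨fun b hb => let ⟨a, ha, hab⟩ := hf hb; ⟨⟨a, ha⟩, hab⟩⟩
  lift t to Multiset A using ht
  exact ⟨t.map (↑), by simp +contextual, by rw [Multiset.map_map, Function.comp_def]⟩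

lemma le_re_mul_testFunction {ζ : ℂ} {R : ℝ} (hR : 0 ≤ R)
    (hζ : ζ ∈ Metric.ball (0 : ℂ) 1 \ {0}) (hnorm : ‖joukowski ζ‖ ≤ R)
    (him : 0 ≤ (joukowski ζ).im) :
    1 / 2 * ((2 * R + 1)⁻¹) ^ 2 ≤ (ζ * testFunction ζ).re := by
  have hζ₁ : ‖ζ‖ < 1 := mem_ball_zero_iff.1 hζ.1
  have hlower : (2 * R + 1)⁻¹ ≤ ‖ζ‖ :=
    inv_le_of_inv_le₀ (norm_pos_iff.2 hζ.2)
      ((inv_norm_le_two_mul_norm_joukowski_add ζ).trans (by linarith))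
  calc 1 / 2 * ((2 * R + 1)⁻¹) ^ 2 ≤ 1 / 2 * ‖ζ‖ ^ 2 := by gcongr
    _ ≤ (ζ * testFunction ζ).re := half_mul_norm_sq_le_re_mul_testFunction hζ₁.le
        (im_nonpos_of_joukowski_im_nonneg hζ.2 hζ₁ him)

lemma neg_five_le_re_mul_testFunction {ζ : ℂ} (hζ : ‖ζ‖ ≤ 1) :
    -5 ≤ (ζ * testFunction ζ).re := by
  have hnorm : ‖ζ * testFunction ζ‖ ≤ 5 := by
    calc ‖ζ * testFunction ζ‖ ≤ 1 * 5 := by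
          rw [norm_mul]; gcongr; exact norm_testFunction_le hζ
      _ = 5 := one_mul 5
  exact (abs_le.1 ((Complex.abs_re_le_norm _).trans hnorm)).1

lemma countP_upperHalfDisc_le_of_norm_sum_one_div_sub_le {B R : ℝ} (hR : 0 ≤ R) (t : Multiset ℂ)
    (ht : ∀ z ∈ t, z ∈ (Complex.ofReal '' Icc (-1) 1)ᶜ)
    (hB : ∀ x ∈ Icc (-1 : ℝ) 1, ‖(t.map fun z => 1 / ((x : ℂ) - z)).sum‖ ≤ B) :
    t.countP (fun z => ‖z‖ ≤ R ∧ 0 ≤ z.im) * (1 / 2 * ((2 * R + 1)⁻¹) ^ 2) ≤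
      5 * (B + (t.card - t.countP fun z => ‖z‖ ≤ R ∧ 0 ≤ z.im)) := by
  obtain ⟨s, hs, rfl⟩ := exists_multiset_map_eq_of_surjOn surjOn_joukowski ht
  simp only [Multiset.map_map, Function.comp_def] at hB
  have hupper : (s.map fun ζ => (ζ * testFunction ζ).re).sum ≤ 5 * B := by
    calc (s.map fun ζ => (ζ * testFunction ζ).re).sum
        = (s.map fun ζ => ζ * testFunction ζ).sum.re := by
          simpa using
            (map_multiset_sum Complex.reAddGroupHom (s.map fun ζ => ζ * testFunction ζ)).symm
      _ ≤ ‖(s.map fun ζ => ζ * testFunction ζ).sum‖ := Complex.re_le_norm _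
      _ ≤ 5 * B := norm_sum_mul_le_of_norm_sum_one_div_sub_joukowski_le
          differentiable_testFunction.differentiableOn
          (fun w hw => norm_testFunction_le (mem_sphere_zero_iff_norm.1 hw).le) s hs hB
  have hlower := le_sum_map_of_countP s (fun ζ => ‖joukowski ζ‖ ≤ R ∧ 0 ≤ (joukowski ζ).im)
    (fun ζ => (ζ * testFunction ζ).re)
    (fun ζ hζ h => le_re_mul_testFunction hR (hs ζ hζ) h.1 h.2)
    (fun ζ hζ => neg_five_le_re_mul_testFunction (mem_ball_zero_iff.1 (hs ζ hζ).1).le)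
  rw [Multiset.countP_map, ← Multiset.countP_eq_card_filter, Multiset.card_map]
  linarith

end ZeroCounting

section IntervalNorm

/-- The norm `‖P‖_{[-1,1]}`. -/
noncomputable def intervalNorm (P : ℂ[X]) : ℝ := ⨆ x : Icc (-1 : ℝ) 1, ‖P.eval ((x : ℝ) : ℂ)‖

lemma intervalNorm_nonneg (P : ℂ[X]) : 0 ≤ intervalNorm P :=
  Real.iSup_nonneg fun _ => norm_nonneg _

lemma norm_eval_le_intervalNorm (P : ℂ[X]) {x : ℝ} (hx : x ∈ Icc (-1 : ℝ) 1) :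
    ‖P.eval (x : ℂ)‖ ≤ intervalNorm P := by
  have hcont : Continuous fun x : Icc (-1 : ℝ) 1 => ‖P.eval ((x : ℝ) : ℂ)‖ := by fun_prop
  exact le_ciSup (isCompact_range hcont).bddAbove ⟨x, hx⟩

lemma intervalNorm_le {P : ℂ[X]} {B : ℝ} (hB : ∀ x ∈ Icc (-1 : ℝ) 1, ‖P.eval (x : ℂ)‖ ≤ B) :
    intervalNorm P ≤ B :=
  have : Nonempty (Icc (-1 : ℝ) 1) := ⟨0, by simp⟩
  ciSup_le fun x => hB x x.2

lemma exists_norm_eval_eq_intervalNorm (P : ℂ[X]) :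
    ∃ x ∈ Icc (-1 : ℝ) 1, ‖P.eval (x : ℂ)‖ = intervalNorm P := by
  obtain ⟨x, hx, hmax⟩ := isCompact_Icc.exists_isMaxOn (s := Icc (-1 : ℝ) 1) ⟨0, by simp⟩
    (f := fun x : ℝ => ‖P.eval (x : ℂ)‖) (by fun_prop)
  exact ⟨x, hx, (norm_eval_le_intervalNorm P hx).antisymm (intervalNorm_le hmax)⟩

lemma intervalNorm_pos {P : ℂ[X]} (hP : P ≠ 0) : 0 < intervalNorm P := by
  refine (intervalNorm_nonneg P).lt_of_ne' fun hzero => hP ?_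
  refine P.eq_zero_of_infinite_isRoot <| ((Icc_infinite (show (-1 : ℝ) < 1 by simp)).image
    Complex.ofReal_injective.injOn).mono ?_
  rintro _ ⟨x, hx, rfl⟩
  exact norm_le_zero_iff.1 (hzero ▸ norm_eval_le_intervalNorm P hx)

lemma norm_eval_sub_eval_le (P : ℂ[X]) {x y : ℝ} (hx : x ∈ Icc (-1 : ℝ) 1)
    (hy : y ∈ Icc (-1 : ℝ) 1) :
    ‖P.eval (y : ℂ) - P.eval (x : ℂ)‖ ≤ intervalNorm (derivative P) * |y - x| :=
  (convex_Icc (-1 : ℝ) 1).norm_image_sub_le_of_norm_hasDerivWithin_le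
    (f := fun x : ℝ => P.eval (x : ℂ))
    (fun x _ => (P.hasDerivAt (x : ℂ)).comp_ofReal.hasDerivWithinAt)
    (fun _ hx => norm_eval_le_intervalNorm _ hx) hx hy

lemma intervalNorm_le_intervalNorm_derivative_mul_abs_sub {P : ℂ[X]} {a x : ℝ}
    (ha : a ∈ Icc (-1 : ℝ) 1) (hroot : P.eval (a : ℂ) = 0) (hx : x ∈ Icc (-1 : ℝ) 1)
    (hmax : ‖P.eval (x : ℂ)‖ = intervalNorm P) :
    intervalNorm P ≤ intervalNorm (derivative P) * |x - a| := by
  simpa [hroot, hmax] using norm_eval_sub_eval_le P ha hx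

end IntervalNorm

section LowerBound

lemma sum_one_div_sub_rescaled_roots {P : ℂ[X]} {c ρ x : ℂ} (hρ : ρ ≠ 0)
    (hne : P.eval (c + ρ * x) ≠ 0) :
    ((P.roots.map fun z => (z - c) / ρ).map fun z => 1 / (x - z)).sum =
      ρ * ((derivative P).eval (c + ρ * x) / P.eval (c + ρ * x)) := by
  have hterm (z : ℂ) : 1 / (x - (z - c) / ρ) = ρ * (1 / (c + ρ * x - z)) := by
    have hsub : x - (z - c) / ρ = (c + ρ * x - z) / ρ := by field_simp; ring
    rw [hsub, one_div_div, mul_one_div]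
  rw [(IsAlgClosed.splits P).eval_derivative_div_eval_of_ne_zero hne, Multiset.map_map,
    ← Multiset.sum_map_mul_left]
  simp only [Function.comp_def, hterm]

lemma countP_upperHalfDisc_le_countP_map_rescale (t : Multiset ℂ) {c ρ : ℝ} (hc : |c| ≤ 1)
    (hρ : 0 < ρ) :
    t.countP (fun z => ‖z‖ ≤ 1 ∧ 0 ≤ z.im) ≤
      (t.map fun z : ℂ => (z - c) / ρ).countP (fun z => ‖z‖ ≤ 2 / ρ ∧ 0 ≤ z.im) := by
  rw [Multiset.countP_map, Multiset.countP_eq_card_filter]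
  refine Multiset.card_le_card (Multiset.monotone_filter_right _ ?_)
  rintro z ⟨hnorm, him⟩
  constructor
  · rw [norm_div, Complex.norm_real, Real.norm_of_nonneg hρ.le]
    gcongr
    calc ‖z - c‖ ≤ ‖z‖ + |c| := by simpa using norm_sub_le z (c : ℂ)
      _ ≤ 2 := by linarith
  · simpa [Complex.div_ofReal_im] using div_nonneg him hρ.le

lemma countP_roots_mul_sq_le {P : ℂ[X]} {c ρ B : ℝ} (hc : |c| ≤ 1) (hρ₀ : 0 < ρ) (hρ₁ : ρ ≤ 1)
    (hne : ∀ x ∈ Icc (-1 : ℝ) 1, P.eval ((c + ρ * x : ℝ) : ℂ) ≠ 0)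
    (hB : ∀ x ∈ Icc (-1 : ℝ) 1, ρ * ‖(derivative P).eval ((c + ρ * x : ℝ) : ℂ)‖ ≤
      B * ‖P.eval ((c + ρ * x : ℝ) : ℂ)‖) :
    P.roots.countP (fun z => ‖z‖ ≤ 1 ∧ 0 ≤ z.im) * (ρ ^ 2 / 50) ≤
      5 * (B + (P.natDegree - P.roots.countP fun z => ‖z‖ ≤ 1 ∧ 0 ≤ z.im)) := by
  have hρ : (ρ : ℂ) ≠ 0 := Complex.ofReal_ne_zero.2 hρ₀.ne'
  push_cast at hne hB
  have hcount := countP_upperHalfDisc_le_of_norm_sum_one_div_sub_le (B := B) (R := 2 / ρ)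
    (by positivity) (P.roots.map fun z => (z - c) / ρ)
    (by
      rintro _ hz ⟨x, hx, rfl⟩
      obtain ⟨z, hz, hzx⟩ := Multiset.mem_map.1 hz
      refine hne x hx ?_
      rw [← hzx, mul_div_cancel₀ _ hρ, add_sub_cancel]
      exact isRoot_of_mem_roots hz)
    (fun x hx => by
      rw [sum_one_div_sub_rescaled_roots hρ (hne x hx), norm_mul, norm_div, Complex.norm_real,
        Real.norm_of_nonneg hρ₀.le, ← mul_div_assoc, div_le_iff₀ (norm_pos_iff.2 (hne x hx))]
      exact hB x hx)
  have hmono : (P.roots.countP (fun z => ‖z‖ ≤ 1 ∧ 0 ≤ z.im) : ℝ) ≤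
      (P.roots.map fun z : ℂ => (z - c) / ρ).countP (fun z => ‖z‖ ≤ 2 / ρ ∧ 0 ≤ z.im) :=
    mod_cast countP_upperHalfDisc_le_countP_map_rescale P.roots hc hρ₀
  have hcoeff : ρ ^ 2 / 50 ≤ 1 / 2 * ((2 * (2 / ρ) + 1)⁻¹) ^ 2 := by
    have hle : ρ / 5 ≤ (2 * (2 / ρ) + 1)⁻¹ := by
      rw [le_inv_comm₀ (by positivity) (by positivity), inv_div, ← le_sub_iff_add_le,
        ← mul_div_assoc, div_sub_one hρ₀.ne']
      gcongr
      linarith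
    calc ρ ^ 2 / 50 = 1 / 2 * (ρ / 5) ^ 2 := by ring
      _ ≤ _ := by gcongr
  have hproduct := mul_le_mul hmono hcoeff (by positivity) (by positivity)
  rw [Multiset.card_map, ← (IsAlgClosed.splits P).natDegree_eq_card_roots] at hcount
  linarith

lemma exists_center_forall_mem_uIcc {a x h : ℝ} (hh₀ : 0 ≤ h) (hh : h ≤ |x - a|) :
    ∃ c, ∀ t ∈ Icc (-1 : ℝ) 1, c + h / 2 * t ∈ uIcc a x ∧ |c + h / 2 * t - x| ≤ h := by
  rcases le_total a x with hax | hxa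
  · rw [abs_of_nonneg (sub_nonneg.2 hax)] at hh
    refine ⟨x - h / 2, fun t ht => ?_⟩
    rw [uIcc_of_le hax, mem_Icc, abs_le]
    refine ⟨⟨?_, ?_⟩, ?_, ?_⟩ <;> nlinarith [ht.1, ht.2]
  · rw [abs_of_nonpos (sub_nonpos.2 hxa)] at hh
    refine ⟨x + h / 2, fun t ht => ?_⟩
    rw [uIcc_of_ge hxa, mem_Icc, abs_le]
    refine ⟨⟨?_, ?_⟩, ?_, ?_⟩ <;> nlinarith [ht.1, ht.2]

lemma half_intervalNorm_le_norm_eval {P : ℂ[X]} {x y : ℝ} (hx : x ∈ Icc (-1 : ℝ) 1)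
    (hy : y ∈ Icc (-1 : ℝ) 1) (hmax : ‖P.eval (x : ℂ)‖ = intervalNorm P)
    (hxy : intervalNorm (derivative P) * |y - x| ≤ intervalNorm P / 2) :
    intervalNorm P / 2 ≤ ‖P.eval (y : ℂ)‖ := by
  have hclose := (norm_eval_sub_eval_le P hx hy).trans hxy
  have htriangle := norm_sub_norm_le (P.eval (x : ℂ)) (P.eval (y : ℂ))
  rw [norm_sub_rev, hmax] at htriangle
  linarith

lemma intervalNorm_le_two_mul_intervalNorm_derivative {P : ℂ[X]}
    (hroot : ∃ a ∈ Icc (-1 : ℝ) 1, P.eval (a : ℂ) = 0) :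
    intervalNorm P ≤ 2 * intervalNorm (derivative P) := by
  obtain ⟨a, ha, hroot⟩ := hroot
  obtain ⟨x, hx, hmax⟩ := exists_norm_eval_eq_intervalNorm P
  have hdist : |x - a| ≤ 2 := abs_le.2 ⟨by linarith [hx.1, ha.2], by linarith [hx.2, ha.1]⟩
  calc intervalNorm P ≤ intervalNorm (derivative P) * |x - a| :=
        intervalNorm_le_intervalNorm_derivative_mul_abs_sub ha hroot hx hmax
    _ ≤ intervalNorm (derivative P) * 2 := by gcongr; exact intervalNorm_nonneg _
    _ = 2 * intervalNorm (derivative P) := mul_comm _ _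

lemma exists_half_intervalNorm_le_norm_eval {P : ℂ[X]} {h : ℝ} (hh₀ : 0 ≤ h)
    (hh : 2 * (intervalNorm (derivative P) * h) = intervalNorm P)
    (hderiv : 0 < intervalNorm (derivative P))
    (hroot : ∃ a ∈ Icc (-1 : ℝ) 1, P.eval (a : ℂ) = 0) :
    ∃ c, ∀ t ∈ Icc (-1 : ℝ) 1, c + h / 2 * t ∈ Icc (-1 : ℝ) 1 ∧
      intervalNorm P / 2 ≤ ‖P.eval ((c + h / 2 * t : ℝ) : ℂ)‖ := by
  obtain ⟨a, ha, hroot⟩ := hroot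
  obtain ⟨x, hx, hmax⟩ := exists_norm_eval_eq_intervalNorm P
  have hle : h ≤ |x - a| := by
    refine le_of_mul_le_mul_left ?_ hderiv
    have hsep := intervalNorm_le_intervalNorm_derivative_mul_abs_sub ha hroot hx hmax
    linarith [intervalNorm_nonneg P]
  obtain ⟨c, hc⟩ := exists_center_forall_mem_uIcc hh₀ hle
  refine ⟨c, fun t ht => ?_⟩
  have hmem : c + h / 2 * t ∈ Icc (-1 : ℝ) 1 := uIcc_subset_Icc ha hx (hc t ht).1
  refine ⟨hmem, half_intervalNorm_le_norm_eval hx hmem hmax ?_⟩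
  calc intervalNorm (derivative P) * |c + h / 2 * t - x|
      ≤ intervalNorm (derivative P) * h := by gcongr; exact (hc t ht).2
    _ = intervalNorm P / 2 := by linarith

lemma countP_roots_mul_sq_intervalNorm_div_le {P : ℂ[X]} (hP : P ≠ 0)
    (hroot : ∃ a ∈ Icc (-1 : ℝ) 1, P.eval (a : ℂ) = 0) :
    P.roots.countP (fun z => ‖z‖ ≤ 1 ∧ 0 ≤ z.im) *
        ((intervalNorm P / (4 * intervalNorm (derivative P))) ^ 2 / 50) ≤
      5 * (1 + (P.natDegree - P.roots.countP fun z => ‖z‖ ≤ 1 ∧ 0 ≤ z.im)) := by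
  have hN := intervalNorm_pos hP
  have hNM := intervalNorm_le_two_mul_intervalNorm_derivative hroot
  have hM : 0 < intervalNorm (derivative P) := by linarith
  obtain ⟨c, hc⟩ := exists_half_intervalNorm_le_norm_eval
    (h := intervalNorm P / (2 * intervalNorm (derivative P))) (by positivity) (by field_simp)
    hM hroot
  have hρ : intervalNorm P / (2 * intervalNorm (derivative P)) / 2 =
      intervalNorm P / (4 * intervalNorm (derivative P)) := by ring
  rw [hρ] at hc
  refine countP_roots_mul_sq_le (c := c) ?_ (by positivity) ?_ (fun x hx => ?_) fun x hx => ?_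
  · simpa [abs_le] using (hc 0 (by simp)).1
  · rw [div_le_one (by positivity)]
    linarith
  · exact norm_pos_iff.1 <| (half_pos hN).trans_le (hc x hx).2
  · calc _ ≤ intervalNorm P / (4 * intervalNorm (derivative P)) * intervalNorm (derivative P) := by
          gcongr; exact norm_eval_le_intervalNorm _ (hc x hx).1
      _ ≤ 1 * (intervalNorm P / 2) := by field_simp; norm_num
      _ ≤ _ := by gcongr; exact (hc x hx).2

/-- The nonzero members of the class `𝓕_{n,k}^c` that have a zero in `[-1, 1]`. -/
structure IsAdmissible (n k : ℕ) (P : ℂ[X]) : Prop where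
  ne_zero : P ≠ 0
  natDegree_le : P.natDegree ≤ n
  le_countP : n - k ≤ P.roots.countP fun z => ‖z‖ ≤ 1 ∧ 0 ≤ z.im
  exists_root : ∃ a ∈ Icc (-1 : ℝ) 1, P.eval (a : ℂ) = 0

lemma IsAdmissible.sqrt_le_intervalNorm_derivative_div {n k : ℕ} {P : ℂ[X]}
    (hP : IsAdmissible n k P) :
    1 / 64 * Real.sqrt (n / (k + 1)) ≤ intervalNorm (derivative P) / intervalNorm P := by
  have hN := intervalNorm_pos hP.ne_zero
  have hNM := intervalNorm_le_two_mul_intervalNorm_derivative hP.exists_root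
  have hM : 0 < intervalNorm (derivative P) := by linarith
  have hcount := countP_roots_mul_sq_intervalNorm_div_le hP.ne_zero hP.exists_root
  set ρ := intervalNorm P / (4 * intervalNorm (derivative P)) with hρ
  set g := P.roots.countP fun z => ‖z‖ ≤ 1 ∧ 0 ≤ z.im
  have hρ₀ : 0 < ρ := by positivity
  have hρ₁ : ρ ≤ 1 := (div_le_one (by positivity)).2 (by linarith)
  have hdeg : (P.natDegree : ℝ) ≤ n := mod_cast hP.natDegree_le
  have hg : (n : ℝ) ≤ g + k := mod_cast Nat.sub_le_iff_le_add.1 hP.le_countP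
  have hsq : n * ρ ^ 2 ≤ 256 * (k + 1) := by
    calc n * ρ ^ 2 ≤ (g + k) * ρ ^ 2 := by gcongr
      _ ≤ g * ρ ^ 2 + k := by
          rw [add_mul]
          gcongr
          exact mul_le_of_le_one_right (by positivity) (pow_le_one₀ hρ₀.le hρ₁)
      _ ≤ 256 * (k + 1) := by linarith
  have hsqrt : Real.sqrt (n / (k + 1)) ≤ 16 / ρ := by
    rw [Real.sqrt_le_left (by positivity), div_pow, div_le_div_iff₀ (by positivity) (by positivity)]
    linarith
  calc 1 / 64 * Real.sqrt (n / (k + 1)) ≤ 1 / 64 * (16 / ρ) := by gcongr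
    _ = intervalNorm (derivative P) / intervalNorm P := by rw [hρ]; field_simp; norm_num

end LowerBound

section NegativeBinomial

/-- The weight `C(m + i, i) xⁱ (1 - x)ᵐ⁺¹` of the negative binomial distribution: the probability
of exactly `i` successes before the `(m + 1)`-st failure, for success probability `x`. -/
noncomputable def negBinomialTerm (m i : ℕ) : ℝ[X] :=
  C ((m + i).choose i : ℝ) * X ^ i * (1 - X) ^ (m + 1)

/-- The probability of at most `K` successes before the `(m + 1)`-st failure, as a polynomial in
the success probability. -/
noncomputable def negBinomialCDF (m K : ℕ) : ℝ[X] :=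
  ∑ i ∈ Finset.range (K + 1), negBinomialTerm m i

/-- The average of `negBinomialCDF m i` over `i ≤ K`. -/
noncomputable def negBinomialCDFAvg (m K : ℕ) : ℝ[X] :=
  C ((K + 1 : ℝ)⁻¹) * ∑ i ∈ Finset.range (K + 1), negBinomialCDF m i

lemma eval_negBinomialTerm (m i : ℕ) (x : ℝ) :
    (negBinomialTerm m i).eval x = (m + i).choose i * x ^ i * (1 - x) ^ (m + 1) := by
  simp [negBinomialTerm]

lemma eval_negBinomialTerm_nonneg (m i : ℕ) {x : ℝ} (hx : x ∈ Icc (0 : ℝ) 1) :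
    0 ≤ (negBinomialTerm m i).eval x := by
  have hx₀ := hx.1
  have hx₁ : 0 ≤ 1 - x := sub_nonneg.2 hx.2
  rw [eval_negBinomialTerm]
  positivity

lemma sum_eval_negBinomialTerm_le_one (m : ℕ) (s : Finset ℕ) {x : ℝ} (hx : x ∈ Icc (0 : ℝ) 1) :
    ∑ i ∈ s, (negBinomialTerm m i).eval x ≤ 1 := by
  rcases hx.2.eq_or_lt with rfl | hlt
  · simp [eval_negBinomialTerm]
  have hgeom := (hasSum_choose_mul_geometric_of_norm_lt_one m
    (by rwa [Real.norm_of_nonneg hx.1])).mul_right ((1 - x) ^ (m + 1))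
  rw [one_div_mul_cancel (pow_pos (sub_pos.2 hlt) _).ne'] at hgeom
  have hsum : HasSum (fun i => (negBinomialTerm m i).eval x) 1 := by
    refine hgeom.congr_fun fun i => ?_
    rw [eval_negBinomialTerm, add_comm m i, Nat.choose_symm_add]
  exact sum_le_hasSum s (fun i _ => eval_negBinomialTerm_nonneg m i hx) hsum

lemma mul_eval_negBinomialTerm_le (m i : ℕ) {x : ℝ} (hx : x ∈ Icc (0 : ℝ) 1) :
    (m + 1) * (x * (negBinomialTerm m i).eval x) ≤
      (i + 1) * (negBinomialTerm m (i + 1)).eval x := by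
  have hchoose : ((m + 1) * (m + i).choose i : ℝ) ≤ (i + 1) * (m + (i + 1)).choose (i + 1) := by
    have habsorb : ((m + i + 1) * (m + i).choose i : ℝ) =
        (m + (i + 1)).choose (i + 1) * (i + 1) :=
      mod_cast Nat.add_one_mul_choose_eq (m + i) i
    rw [mul_comm (i + 1 : ℝ), ← habsorb]
    gcongr
    linarith [i.cast_nonneg (α := ℝ)]
  have hx₀ := hx.1
  have hx₁ : 0 ≤ 1 - x := sub_nonneg.2 hx.2
  simp only [eval_negBinomialTerm]
  calc _ = ((m + 1) * (m + i).choose i) * (x ^ (i + 1) * (1 - x) ^ (m + 1)) := by ring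
    _ ≤ ((i + 1) * (m + (i + 1)).choose (i + 1)) * (x ^ (i + 1) * (1 - x) ^ (m + 1)) := by gcongr
    _ = _ := by ring

lemma eval_negBinomialCDF (m K : ℕ) (x : ℝ) :
    (negBinomialCDF m K).eval x =
      ∑ i ∈ Finset.range (K + 1), (negBinomialTerm m i).eval x := by
  rw [negBinomialCDF, eval_finsetSum]

lemma eval_negBinomialCDF_mem_Icc (m K : ℕ) {x : ℝ} (hx : x ∈ Icc (0 : ℝ) 1) :
    (negBinomialCDF m K).eval x ∈ Icc (0 : ℝ) 1 := by
  rw [eval_negBinomialCDF]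
  exact ⟨Finset.sum_nonneg fun i _ => eval_negBinomialTerm_nonneg m i hx,
    sum_eval_negBinomialTerm_le_one m _ hx⟩

lemma mul_eval_negBinomialCDF_le (m K : ℕ) {x : ℝ} (hx : x ∈ Icc (0 : ℝ) 1) :
    x * (negBinomialCDF m K).eval x ≤ (K + 1) / (m + 1) := by
  rw [le_div_iff₀' (by positivity), eval_negBinomialCDF, Finset.mul_sum, Finset.mul_sum]
  calc ∑ i ∈ Finset.range (K + 1), (m + 1) * (x * (negBinomialTerm m i).eval x)
      ≤ ∑ i ∈ Finset.range (K + 1), (K + 1) * (negBinomialTerm m (i + 1)).eval x := by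
        refine Finset.sum_le_sum fun i hi => (mul_eval_negBinomialTerm_le m i hx).trans ?_
        have hiK : (i : ℝ) ≤ K := mod_cast Finset.mem_range_succ_iff.1 hi
        gcongr
        exact eval_negBinomialTerm_nonneg m (i + 1) hx
    _ ≤ (K + 1) * 1 := by
        rw [← Finset.mul_sum]
        gcongr
        simpa using sum_eval_negBinomialTerm_le_one m
          ((Finset.range (K + 1)).map (addRightEmbedding 1)) hx
    _ = K + 1 := mul_one _

lemma sq_mem_Icc_zero_one {x : ℝ} (hx : x ∈ Icc (-1 : ℝ) 1) : x ^ 2 ∈ Icc (0 : ℝ) 1 :=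
  ⟨sq_nonneg x, (sq_le_one_iff_abs_le_one x).2 (abs_le.2 hx)⟩

lemma abs_mul_eval_negBinomialCDF_sq_le (m K : ℕ) {x : ℝ} (hx : x ∈ Icc (-1 : ℝ) 1) :
    |x| * (negBinomialCDF m K).eval (x ^ 2) ≤ Real.sqrt ((K + 1) / (m + 1)) := by
  have hsq : x ^ 2 ∈ Icc (0 : ℝ) 1 := sq_mem_Icc_zero_one hx
  obtain ⟨h₀, h₁⟩ := eval_negBinomialCDF_mem_Icc m K hsq
  refine Real.le_sqrt_of_sq_le ?_
  calc (|x| * (negBinomialCDF m K).eval (x ^ 2)) ^ 2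
      = x ^ 2 * (negBinomialCDF m K).eval (x ^ 2) * (negBinomialCDF m K).eval (x ^ 2) := by
        rw [mul_pow, sq_abs]; ring
    _ ≤ x ^ 2 * (negBinomialCDF m K).eval (x ^ 2) * 1 := by gcongr
    _ ≤ (K + 1) / (m + 1) := by rw [mul_one]; exact mul_eval_negBinomialCDF_le m K hsq

lemma derivative_negBinomialCDF (m K : ℕ) :
    derivative (negBinomialCDF m K) =
      -(C ((m + K + 1) * (m + K).choose K : ℝ) * X ^ K * (1 - X) ^ m) := by
  induction K with
  | zero =>
    simp [negBinomialCDF, negBinomialTerm, derivative_pow]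
  | succ K ih =>
    have hchoose : ((m + K + 1) * (m + K).choose K : ℝ) =
        (m + (K + 1)).choose (K + 1) * (K + 1) :=
      mod_cast Nat.add_one_mul_choose_eq (m + K) K
    rw [negBinomialCDF, Finset.sum_range_succ, derivative_add, ← negBinomialCDF, ih, hchoose,
      negBinomialTerm]
    simp only [map_mul, map_natCast, map_add, map_one, derivative_mul, derivative_natCast,
      zero_mul, derivative_pow, Nat.cast_add, Nat.cast_one, add_tsub_cancel_right, derivative_X,
      mul_one, zero_add, derivative_sub, derivative_one, zero_sub, mul_neg]
    ring

lemma succ_mul_choose_succ_add_le {m i : ℕ} (hi : i ≤ m + 1) :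
    ((m + 1 + i + 1) * (m + 1 + i).choose i : ℝ) ≤ 6 * (m + 1) * (m + i).choose i := by
  have habsorb : ((m + i).choose i * (m + i + 1) : ℝ) = (m + i + 1).choose i * (m + 1) := by
    have h := Nat.choose_mul_succ_eq (m + i) i
    rw [Nat.add_right_comm m i 1, Nat.add_sub_cancel, Nat.add_right_comm m 1 i] at h
    exact_mod_cast h
  have hi' : (i : ℝ) ≤ m + 1 := mod_cast hi
  refine le_of_mul_le_mul_left ?_ (by positivity : (0 : ℝ) < m + 1)
  rw [Nat.add_right_comm m 1 i]
  calc (m + 1) * ((m + 1 + i + 1) * (m + i + 1).choose i : ℝ)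
      = (m + 1 + i + 1) * (m + 1 + i) * (m + i).choose i := by
        linear_combination -(m + 1 + i + 1 : ℝ) * habsorb
    _ ≤ (3 * (m + 1)) * (2 * (m + 1)) * (m + i).choose i := by gcongr <;> linarith
    _ = (m + 1) * (6 * (m + 1) * (m + i).choose i) := by ring

lemma abs_eval_derivative_negBinomialCDF_le {m i : ℕ} (hi : i ≤ m + 1) {x : ℝ}
    (hx : x ∈ Icc (0 : ℝ) 1) :
    |(derivative (negBinomialCDF (m + 1) i)).eval x| ≤
      6 * (m + 1) * (negBinomialTerm m i).eval x := by
  have hx₀ := hx.1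
  have hx₁ : 0 ≤ 1 - x := sub_nonneg.2 hx.2
  have heval : (derivative (negBinomialCDF (m + 1) i)).eval x =
      -((m + 1 + i + 1) * (m + 1 + i).choose i * x ^ i * (1 - x) ^ (m + 1)) := by
    simp [derivative_negBinomialCDF]
  rw [heval, abs_neg, abs_of_nonneg (by positivity), eval_negBinomialTerm]
  calc _ ≤ 6 * (m + 1) * (m + i).choose i * x ^ i * (1 - x) ^ (m + 1) := by
        gcongr ?_ * _ * _; exact succ_mul_choose_succ_add_le hi
    _ = _ := by ring

lemma eval_negBinomialCDFAvg_mem_Icc (m K : ℕ) {x : ℝ} (hx : x ∈ Icc (0 : ℝ) 1) :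
    (negBinomialCDFAvg m K).eval x ∈ Icc (0 : ℝ) 1 := by
  rw [negBinomialCDFAvg, eval_mul, eval_C, eval_finsetSum, inv_mul_eq_div]
  constructor
  · exact div_nonneg (Finset.sum_nonneg fun i _ => (eval_negBinomialCDF_mem_Icc m i hx).1)
      (by positivity)
  · rw [div_le_one (by positivity)]
    simpa using Finset.sum_le_card_nsmul (Finset.range (K + 1)) _ 1
      fun i _ => (eval_negBinomialCDF_mem_Icc m i hx).2

lemma eval_zero_negBinomialCDFAvg (m K : ℕ) : (negBinomialCDFAvg m K).eval 0 = 1 := by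
  have hCDF (i : ℕ) : (negBinomialCDF m i).eval 0 = 1 := by
    simp [eval_negBinomialCDF, eval_negBinomialTerm, Finset.sum_range_succ']
  rw [negBinomialCDFAvg, eval_mul, eval_C, eval_finsetSum]
  simp only [hCDF, Finset.sum_const, Finset.card_range, nsmul_one, Nat.cast_add_one]
  exact inv_mul_cancel₀ (by positivity)

lemma one_sub_X_pow_dvd_negBinomialCDFAvg (m K : ℕ) :
    (1 - X) ^ (m + 1) ∣ negBinomialCDFAvg m K :=
  (Finset.dvd_sum fun _ _ => Finset.dvd_sum fun _ _ => Dvd.intro_left _ rfl).mul_left _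

lemma natDegree_negBinomialTerm_le (m i : ℕ) : (negBinomialTerm m i).natDegree ≤ i + (m + 1) := by
  rw [negBinomialTerm]
  refine natDegree_mul_le_of_le (natDegree_C_mul_X_pow_le _ _) ?_
  exact (natDegree_pow_le_of_le (m + 1) (by compute_degree)).trans_eq (mul_one _)

lemma natDegree_negBinomialCDFAvg_le (m K : ℕ) :
    (negBinomialCDFAvg m K).natDegree ≤ K + (m + 1) := by
  refine (natDegree_C_mul_le _ _).trans <| natDegree_sum_le_of_forall_le _ _ fun j hj =>
    natDegree_sum_le_of_forall_le _ _ fun i hi => (natDegree_negBinomialTerm_le m i).trans ?_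
  rw [Finset.mem_range] at hj hi
  omega

lemma abs_eval_derivative_negBinomialCDFAvg_le {m K : ℕ} (hK : K ≤ m + 1) {x : ℝ}
    (hx : x ∈ Icc (0 : ℝ) 1) :
    |(derivative (negBinomialCDFAvg (m + 1) K)).eval x| ≤
      6 * ((m + 1) / (K + 1)) * (negBinomialCDF m K).eval x := by
  rw [negBinomialCDFAvg, derivative_C_mul, derivative_sum, eval_mul, eval_C, eval_finsetSum,
    abs_mul, abs_of_nonneg (by positivity)]
  calc (K + 1 : ℝ)⁻¹ *
        |∑ i ∈ Finset.range (K + 1), (derivative (negBinomialCDF (m + 1) i)).eval x|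
      ≤ (K + 1 : ℝ)⁻¹ *
        ∑ i ∈ Finset.range (K + 1), 6 * (m + 1) * (negBinomialTerm m i).eval x := by
        gcongr
        refine (Finset.abs_sum_le_sum_abs _ _).trans (Finset.sum_le_sum fun i hi => ?_)
        exact abs_eval_derivative_negBinomialCDF_le
          ((Finset.mem_range_succ_iff.1 hi).trans hK) hx
    _ = 6 * ((m + 1) / (K + 1)) * (negBinomialCDF m K).eval x := by
        rw [← Finset.mul_sum, ← eval_negBinomialCDF]
        ring

lemma abs_eval_derivative_negBinomialCDFAvg_comp_sq_le {m K : ℕ} (hK : K ≤ m + 1) {x : ℝ}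
    (hx : x ∈ Icc (-1 : ℝ) 1) :
    |(derivative ((negBinomialCDFAvg (m + 1) K).comp (X ^ 2))).eval x| ≤
      12 * Real.sqrt ((m + 1) / (K + 1)) := by
  have hsq : x ^ 2 ∈ Icc (0 : ℝ) 1 := sq_mem_Icc_zero_one hx
  have heval : (derivative ((negBinomialCDFAvg (m + 1) K).comp (X ^ 2))).eval x =
      2 * x * (derivative (negBinomialCDFAvg (m + 1) K)).eval (x ^ 2) := by
    simp [derivative_comp, one_add_one_eq_two]
  have hsqrt : ((m + 1) / (K + 1) : ℝ) * Real.sqrt ((K + 1) / (m + 1)) =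
      Real.sqrt ((m + 1) / (K + 1)) := by
    rw [← inv_div (m + 1 : ℝ), Real.sqrt_inv, ← div_eq_mul_inv, Real.div_sqrt]
  rw [heval, abs_mul, abs_mul, abs_two]
  calc 2 * |x| * |(derivative (negBinomialCDFAvg (m + 1) K)).eval (x ^ 2)|
      ≤ 2 * |x| * (6 * ((m + 1) / (K + 1)) * (negBinomialCDF m K).eval (x ^ 2)) := by
        gcongr; exact abs_eval_derivative_negBinomialCDFAvg_le hK hsq
    _ = 12 * ((m + 1) / (K + 1) * (|x| * (negBinomialCDF m K).eval (x ^ 2))) := by ring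
    _ ≤ 12 * ((m + 1) / (K + 1) * Real.sqrt ((K + 1) / (m + 1))) := by
        gcongr; exact abs_mul_eval_negBinomialCDF_sq_le m K hx
    _ = 12 * Real.sqrt ((m + 1) / (K + 1)) := by rw [hsqrt]

end NegativeBinomial

section UpperBound

lemma natDegree_le_countP_roots_of_dvd {R : Type*} [CommRing R] [IsDomain R] {p q : R[X]}
    (hp : p ≠ 0) (hqp : q ∣ p) (hq : q.Splits) {S : Set R} [DecidablePred (· ∈ S)]
    (hS : ∀ z ∈ q.roots, z ∈ S) :
    q.natDegree ≤ p.roots.countP (· ∈ S) := by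
  calc q.natDegree = q.roots.countP (· ∈ S) := by
        rw [hq.natDegree_eq_card_roots, Multiset.countP_eq_card.2 hS]
    _ ≤ p.roots.countP (· ∈ S) := Multiset.countP_le_of_le _ (roots.le_of_dvd hp hqp)

lemma isAdmissible_map_ofReal {n k : ℕ} {p : ℝ[X]} (hp : p ≠ 0) (hdeg : p.natDegree ≤ n)
    (hcount : n - k ≤ p.roots.countP (· ∈ Icc (-1) 1))
    (hroot : ∃ a ∈ Icc (-1 : ℝ) 1, p.eval a = 0) :
    IsAdmissible n k (p.map Complex.ofRealHom) where
  ne_zero := (Polynomial.map_ne_zero_iff Complex.ofReal_injective).2 hp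
  natDegree_le := natDegree_map_le.trans hdeg
  le_countP := by
    have hmap : p.map Complex.ofRealHom ≠ 0 :=
      (Polynomial.map_ne_zero_iff Complex.ofReal_injective).2 hp
    refine hcount.trans (le_trans ?_ (Multiset.countP_le_of_le _ (map_roots_le hmap)))
    rw [Multiset.countP_map, Multiset.countP_eq_card_filter]
    refine Multiset.card_le_card (Multiset.monotone_filter_right _ fun x hx => ?_)
    simpa [abs_le] using hx
  exists_root := by
    obtain ⟨a, ha, hroot⟩ := hroot
    exact ⟨a, ha, by rw [← Complex.ofRealHom_eq_coe, eval_map_apply, hroot, map_zero]⟩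

lemma norm_eval_map_ofReal (p : ℝ[X]) (x : ℝ) :
    ‖(p.map Complex.ofRealHom).eval (x : ℂ)‖ = |p.eval x| := by
  rw [← Complex.ofRealHom_eq_coe, eval_map_apply, Complex.ofRealHom_eq_coe, Complex.norm_real,
    Real.norm_eq_abs]

/-- The extremal polynomial for the upper bound. Its zeros at `±1` come from the average of negative
binomial distribution functions; the factor `(1 - X) ^ e` adjusts the parity of their number. -/
noncomputable def extremalPoly (e m K : ℕ) : ℝ[X] :=
  (1 - X) ^ e * (negBinomialCDFAvg (m + 1) K).comp (X ^ 2)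

lemma eval_zero_extremalPoly (e m K : ℕ) : (extremalPoly e m K).eval 0 = 1 := by
  simp [extremalPoly, eval_zero_negBinomialCDFAvg]

lemma extremalPoly_ne_zero (e m K : ℕ) : extremalPoly e m K ≠ 0 := fun h => by
  simpa [h] using eval_zero_extremalPoly e m K

lemma dvd_extremalPoly (e m K : ℕ) :
    (X - C 1) ^ (m + 2 + e) * (X + C 1) ^ (m + 2) ∣ extremalPoly e m K := by
  obtain ⟨r, hr⟩ := one_sub_X_pow_dvd_negBinomialCDFAvg (m + 1) K
  have hlinear : (1 - X : ℝ[X]) = -1 * (X - C 1) := by rw [C_1]; ring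
  have hquadratic : (1 - X ^ 2 : ℝ[X]) = -1 * ((X - C 1) * (X + C 1)) := by rw [C_1]; ring
  refine ⟨(-1) ^ (m + 2 + e) * r.comp (X ^ 2), ?_⟩
  rw [extremalPoly, hr, mul_comp, pow_comp, sub_comp, one_comp, X_comp, hquadratic, hlinear]
  simp only [mul_pow]
  ring

lemma natDegree_extremalPoly_le (e m K : ℕ) :
    (extremalPoly e m K).natDegree ≤ e + 2 * (K + (m + 2)) := by
  refine natDegree_mul_le_of_le ?_ ?_
  · exact (natDegree_pow_le_of_le e (by compute_degree)).trans_eq (mul_one _)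
  · rw [natDegree_comp, natDegree_X_pow, mul_comm]
    gcongr
    exact natDegree_negBinomialCDFAvg_le (m + 1) K

lemma le_countP_roots_extremalPoly (e m K : ℕ) :
    2 * (m + 2) + e ≤ (extremalPoly e m K).roots.countP (· ∈ Icc (-1) 1) := by
  have hne : ((X - C 1) ^ (m + 2 + e) * (X + C 1) ^ (m + 2) : ℝ[X]) ≠ 0 :=
    mul_ne_zero (pow_ne_zero _ (X_sub_C_ne_zero 1)) (pow_ne_zero _ (X_add_C_ne_zero 1))
  have hdeg : ((X - C 1) ^ (m + 2 + e) * (X + C 1) ^ (m + 2) : ℝ[X]).natDegree =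
      2 * (m + 2) + e := by
    rw [natDegree_mul (left_ne_zero_of_mul hne) (right_ne_zero_of_mul hne), natDegree_pow,
      natDegree_pow, natDegree_X_sub_C, natDegree_X_add_C]
    ring
  rw [← hdeg]
  refine natDegree_le_countP_roots_of_dvd (extremalPoly_ne_zero e m K) (dvd_extremalPoly e m K)
    (((Splits.X_sub_C 1).pow _).mul ((Splits.X_add_C 1).pow _)) fun z hz => ?_
  rw [roots_mul hne, Multiset.mem_add, roots_pow, roots_pow, roots_X_sub_C, roots_X_add_C] at hz
  rcases hz with hz | hz <;> simp [Multiset.mem_singleton.1 (Multiset.mem_of_mem_nsmul hz)]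

lemma abs_eval_derivative_extremalPoly_le {e m K : ℕ} (he : e ≤ 1) (hK : K ≤ m + 1) {x : ℝ}
    (hx : x ∈ Icc (-1 : ℝ) 1) :
    |(derivative (extremalPoly e m K)).eval x| ≤ 1 + 24 * Real.sqrt ((m + 1) / (K + 1)) := by
  have hderiv := abs_eval_derivative_negBinomialCDFAvg_comp_sq_le hK hx
  have hsqrt := Real.sqrt_nonneg ((m + 1) / (K + 1))
  interval_cases e
  · simp only [extremalPoly, pow_zero, one_mul]
    linarith
  have hsq : x ^ 2 ∈ Icc (0 : ℝ) 1 := sq_mem_Icc_zero_one hx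
  obtain ⟨hval₀, hval₁⟩ := eval_negBinomialCDFAvg_mem_Icc (m + 1) K hsq
  set f := (negBinomialCDFAvg (m + 1) K).comp (X ^ 2) with hf
  have hval : |f.eval x| ≤ 1 := by
    simpa [hf, abs_le] using ⟨by linarith, hval₁⟩
  have heval : (derivative (extremalPoly 1 m K)).eval x =
      (1 - x) * (derivative f).eval x - f.eval x := by
    simp only [extremalPoly, pow_one, ← hf, derivative_mul, derivative_sub, derivative_one,
      derivative_X, zero_sub, neg_mul, one_mul, eval_add, eval_neg, eval_mul, eval_sub, eval_one,
      eval_X]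
    ring
  calc |(derivative (extremalPoly 1 m K)).eval x|
      ≤ |1 - x| * |(derivative f).eval x| + |f.eval x| := by
        rw [heval, ← abs_mul]; exact abs_sub _ _
    _ ≤ 2 * (12 * Real.sqrt ((m + 1) / (K + 1))) + 1 := by
        gcongr
        exact abs_le.2 ⟨by linarith [hx.2], by linarith [hx.1]⟩
    _ = 1 + 24 * Real.sqrt ((m + 1) / (K + 1)) := by ring

lemma half_le_sqrt_div {n k : ℕ} (hn : 1 ≤ n) (hk : k ≤ n) :
    1 / 2 ≤ Real.sqrt ((n : ℝ) / (k + 1)) := by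
  have hn' : (1 : ℝ) ≤ n := mod_cast hn
  have hk' : (k : ℝ) ≤ n := mod_cast hk
  refine Real.le_sqrt_of_sq_le ?_
  rw [le_div_iff₀ (by positivity)]
  linarith

lemma sqrt_div_min_le {n k m : ℕ} (hm : 2 * (m + 1) + k ≤ n) :
    Real.sqrt ((m + 1) / ((min (k / 2) (m + 1) : ℕ) + 1)) ≤ 2 * Real.sqrt (n / (k + 1)) := by
  have hmul : (m + 1) * (k + 1) ≤ 4 * n * (min (k / 2) (m + 1) + 1) := by
    rcases min_choice (k / 2) (m + 1) with h | h <;> rw [h]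
    · have : k + 1 ≤ 2 * (k / 2 + 1) := by omega
      nlinarith
    · nlinarith
  rw [← Real.sqrt_sq (zero_le_two (α := ℝ)), ← Real.sqrt_mul (sq_nonneg 2)]
  refine Real.sqrt_le_sqrt ?_
  rw [← mul_div_assoc, div_le_div_iff₀ (by positivity) (by positivity)]
  have hfour : (2 : ℝ) ^ 2 = (4 : ℕ) := by norm_num
  rw [hfour]
  exact_mod_cast hmul

lemma exists_isAdmissible_of_four_le_sub {n k : ℕ} (hnk : 4 ≤ n - k) :
    ∃ P, IsAdmissible n k P ∧ 1 ≤ intervalNorm P ∧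
      intervalNorm (derivative P) ≤ 50 * Real.sqrt (n / (k + 1)) := by
  obtain ⟨m, e, he, hme⟩ : ∃ m e, e ≤ 1 ∧ n - k = 2 * (m + 2) + e :=
    ⟨(n - k) / 2 - 2, (n - k) % 2, by omega, by omega⟩
  have hroot : (extremalPoly e m (min (k / 2) (m + 1))).eval 1 = 0 := by
    refine eval_eq_zero_of_dvd_of_eval_eq_zero (dvd_extremalPoly e m _) ?_
    simp
  refine ⟨(extremalPoly e m (min (k / 2) (m + 1))).map Complex.ofRealHom,
    isAdmissible_map_ofReal (extremalPoly_ne_zero _ _ _) ?_ ?_ ⟨1, by simp, hroot⟩, ?_,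
    intervalNorm_le fun x hx => ?_⟩
  · exact (natDegree_extremalPoly_le _ _ _).trans (by omega)
  · exact hme ▸ le_countP_roots_extremalPoly _ _ _
  · have hzero := norm_eval_le_intervalNorm
      ((extremalPoly e m (min (k / 2) (m + 1))).map Complex.ofRealHom) (x := 0) (by simp)
    rwa [norm_eval_map_ofReal, eval_zero_extremalPoly, abs_one] at hzero
  · rw [derivative_map, norm_eval_map_ofReal]
    have hderiv := abs_eval_derivative_extremalPoly_le he (min_le_right (k / 2) (m + 1)) hx
    have hsqrt := sqrt_div_min_le (n := n) (k := k) (m := m) (by omega)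
    have hhalf := half_le_sqrt_div (n := n) (k := k) (by omega) (by omega)
    linarith

lemma exists_isAdmissible_of_sub_le_three {n k : ℕ} (hn : 1 ≤ n) (hk : k ≤ n) (hnk : n - k ≤ 3) :
    ∃ P, IsAdmissible n k P ∧ 1 ≤ intervalNorm P ∧
      intervalNorm (derivative P) ≤ 50 * Real.sqrt (n / (k + 1)) := by
  obtain ⟨d, hd₀, hd₃, hdn, hnkd⟩ : ∃ d, d ≠ 0 ∧ d ≤ 3 ∧ d ≤ n ∧ n - k ≤ d :=
    ⟨max (n - k) 1, by omega⟩
  refine ⟨(X ^ d : ℝ[X]).map Complex.ofRealHom, isAdmissible_map_ofReal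
    (pow_ne_zero _ X_ne_zero) ((natDegree_X_pow_le _).trans hdn) (hnkd.trans ?_)
    ⟨0, by simp, by simp [hd₀]⟩, ?_, intervalNorm_le fun x hx => ?_⟩
  · refine (natDegree_X_pow d).symm.le.trans (natDegree_le_countP_roots_of_dvd
      (pow_ne_zero _ X_ne_zero) dvd_rfl (.X_pow d) fun z hz => ?_)
    rw [roots_X_pow] at hz
    simp [Multiset.mem_singleton.1 (Multiset.mem_of_mem_nsmul hz)]
  · have hone := norm_eval_le_intervalNorm
      ((X ^ d : ℝ[X]).map Complex.ofRealHom) (x := 1) (by simp)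
    rwa [norm_eval_map_ofReal, eval_pow, eval_X, one_pow, abs_one] at hone
  · rw [derivative_map, norm_eval_map_ofReal, derivative_X_pow, eval_C_mul,
      eval_pow, eval_X, abs_mul, abs_pow, Nat.abs_cast]
    have hpow : |x| ^ (d - 1) ≤ 1 := pow_le_one₀ (abs_nonneg x) (abs_le.2 hx)
    have hd₃' : (d : ℝ) ≤ 3 := mod_cast hd₃
    have hhalf := half_le_sqrt_div hn hk
    calc (d : ℝ) * |x| ^ (d - 1) ≤ 3 * 1 := by gcongr
      _ ≤ _ := by linarith

end UpperBound

section Infimum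

/-- The set of quotients `‖P'‖_{[-1,1]} / ‖P‖_{[-1,1]}` whose infimum is estimated. -/
def derivRatios (n k : ℕ) : Set ℝ :=
  {r | ∃ P : Polynomial ℂ, P ≠ 0 ∧ P.natDegree ≤ n ∧
    n - k ≤ (P.roots.countP (fun z => ‖z‖ ≤ 1 ∧ 0 ≤ z.im)) ∧
    (∃ a ∈ Icc (-1 : ℝ) 1, P.eval (a : ℂ) = 0) ∧
    r = intervalNorm (derivative P) / intervalNorm P}

lemma mem_derivRatios {n k : ℕ} {r : ℝ} : r ∈ derivRatios n k ↔
    ∃ P, IsAdmissible n k P ∧ r = intervalNorm (derivative P) / intervalNorm P :=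
  ⟨fun ⟨P, h₀, hdeg, hcount, hroot, hr⟩ => ⟨P, ⟨h₀, hdeg, hcount, hroot⟩, hr⟩,
    fun ⟨P, hP, hr⟩ => ⟨P, hP.ne_zero, hP.natDegree_le, hP.le_countP, hP.exists_root, hr⟩⟩

lemma exists_isAdmissible {n k : ℕ} (hn : 1 ≤ n) (hk : k ≤ n) :
    ∃ P, IsAdmissible n k P ∧ 1 ≤ intervalNorm P ∧
      intervalNorm (derivative P) ≤ 50 * Real.sqrt (n / (k + 1)) := by
  rcases le_or_gt (n - k) 3 with hle | hgt
  · exact exists_isAdmissible_of_sub_le_three hn hk hle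
  · exact exists_isAdmissible_of_four_le_sub hgt

-- So for `n = 0` the infimum is the junk value `sInf ∅ = 0`, which satisfies both bounds.
lemma derivRatios_zero (k : ℕ) : derivRatios 0 k = ∅ := by
  refine eq_empty_of_forall_notMem fun r hr => ?_
  obtain ⟨P, hP, -⟩ := mem_derivRatios.1 hr
  obtain ⟨a, -, hroot⟩ := hP.exists_root
  have hconst := eq_C_of_natDegree_le_zero hP.natDegree_le
  rw [hconst, eval_C] at hroot
  exact hP.ne_zero (by rw [hconst, hroot, C_0])

lemma le_sInf_derivRatios {n k : ℕ} (hk : k ≤ n) :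
    1 / 64 * Real.sqrt (n / (k + 1)) ≤ sInf (derivRatios n k) := by
  rcases n.eq_zero_or_pos with rfl | hn
  · simp [derivRatios_zero]
  obtain ⟨P, hP, -⟩ := exists_isAdmissible hn hk
  refine le_csInf ⟨_, mem_derivRatios.2 ⟨P, hP, rfl⟩⟩ fun r hr => ?_
  obtain ⟨Q, hQ, rfl⟩ := mem_derivRatios.1 hr
  exact hQ.sqrt_le_intervalNorm_derivative_div

lemma sInf_derivRatios_le {n k : ℕ} (hk : k ≤ n) :
    sInf (derivRatios n k) ≤ 50 * Real.sqrt (n / (k + 1)) := by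
  rcases n.eq_zero_or_pos with rfl | hn
  · simp [derivRatios_zero]
  obtain ⟨P, hP, hone, hderiv⟩ := exists_isAdmissible hn hk
  have hbdd : BddBelow (derivRatios n k) := by
    refine ⟨0, fun r hr => ?_⟩
    obtain ⟨Q, -, rfl⟩ := mem_derivRatios.1 hr
    exact div_nonneg (intervalNorm_nonneg _) (intervalNorm_nonneg _)
  calc sInf (derivRatios n k) ≤ intervalNorm (derivative P) / intervalNorm P :=
        csInf_le hbdd (mem_derivRatios.2 ⟨P, hP, rfl⟩)
    _ ≤ intervalNorm (derivative P) := div_le_self (intervalNorm_nonneg _) hone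
    _ ≤ 50 * Real.sqrt (n / (k + 1)) := hderiv

end Infimum

theorem main_theorem :
    ∃ c₁ c₂ : ℝ, 0 < c₁ ∧ 0 < c₂ ∧ ∀ n k : ℕ, k ≤ n →
      c₁ * Real.sqrt ((n : ℝ) / ((k : ℝ) + 1)) ≤
        sInf {r : ℝ | ∃ P : Polynomial ℂ, P ≠ 0 ∧ P.natDegree ≤ n ∧
          n - k ≤ (P.roots.countP (fun z => ‖z‖ ≤ 1 ∧ 0 ≤ z.im)) ∧
          (∃ a ∈ Icc (-1:ℝ) 1, P.eval (a : ℂ) = 0) ∧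
          r = (⨆ x : Icc (-1:ℝ) 1, ‖(Polynomial.derivative P).eval ((x : ℝ) : ℂ)‖) /
              (⨆ x : Icc (-1:ℝ) 1, ‖P.eval ((x : ℝ) : ℂ)‖)} ∧
      sInf {r : ℝ | ∃ P : Polynomial ℂ, P ≠ 0 ∧ P.natDegree ≤ n ∧
          n - k ≤ (P.roots.countP (fun z => ‖z‖ ≤ 1 ∧ 0 ≤ z.im)) ∧
          (∃ a ∈ Icc (-1:ℝ) 1, P.eval (a : ℂ) = 0) ∧
          r = (⨆ x : Icc (-1:ℝ) 1, ‖(Polynomial.derivative P).eval ((x : ℝ) : ℂ)‖) /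
              (⨆ x : Icc (-1:ℝ) 1, ‖P.eval ((x : ℝ) : ℂ)‖)} ≤
        c₂ * Real.sqrt ((n : ℝ) / ((k : ℝ) + 1)) := by
  exact ⟨1 / 64, 50, by norm_num, by norm_num, fun n k hk =>
    ⟨le_sInf_derivRatios hk, sInf_derivRatios_le hk⟩⟩
end

section
/- There is an absolute constant c₂ > 0 such that for every 1 ≤ k ≤ n/2 there exists a nonzero real polynomial P of the form P(x) = (x²-1)^{n-k}·R(x) with R of degree at most 2k, satisfying ‖P'‖_{[-1,1]} ≤ c₂·(n/k)^{1/2}·‖P‖_{[-1,1]}. -/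
open Polynomial Set

/-!
For `j < k`, let `Tⱼ` be the Taylor polynomial of degree `j` of `(1 - y)⁻ᵐ`. The function
`(1 - y) ^ m * Tⱼ y` falls from `1` to `0` on `[0, 1]`, mostly around `y ≈ j / (j + m)`,
and its derivative is the single term `-m * (j + m).choose m * y ^ j * (1 - y) ^ (m - 1)`. Summing
over `j < k` spreads the drops evenly and gives a ramp of height `k`. Comparing its derivative with
the negative binomial distribution shows that, for `k < m`, its slope at `y` is `O(min m (k / y))`.
Substituting `y = x ^ 2` therefore gives a polynomial of height `k` and slope `O(√(m * k))`, and for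
`m = n - k + 1` this slope is at most a constant times `√(n / k) * k`.
-/

section Binomial

theorem negBinomial_sum_le_one (t : ℕ) (s : Finset ℕ) {y : ℝ} (hy : y ∈ Icc 0 1) :
    (1 - y) ^ (t + 1) * ∑ j ∈ s, ((j + t).choose t : ℝ) * y ^ j ≤ 1 := by
  obtain ⟨hy0, hy1⟩ := hy
  rcases hy1.eq_or_lt with rfl | hlt
  · simp
  · have hsum := hasSum_choose_mul_geometric_of_norm_lt_one t
      (show ‖y‖ < 1 by rwa [Real.norm_of_nonneg hy0])
    have hpos : 0 < (1 - y) ^ (t + 1) := pow_pos (sub_pos.mpr hlt) _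
    rw [mul_comm, ← le_div_iff₀ hpos]
    exact sum_le_hasSum s (fun _ _ => by positivity) hsum

theorem choose_add_succ_le_two_mul {j t : ℕ} (h : j ≤ t + 1) :
    (j + t + 1).choose (t + 1) ≤ 2 * (j + t).choose t := by
  refine Nat.le_of_mul_le_mul_right ?_ t.succ_pos
  calc (j + t + 1).choose (t + 1) * (t + 1)
      = (j + t + 1) * (j + t).choose t := (Nat.add_one_mul_choose_eq _ _).symm
    _ ≤ (2 * (t + 1)) * (j + t).choose t := by gcongr; omega
    _ = 2 * (j + t).choose t * (t + 1) := by ring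

theorem choose_add_two_le_four_mul {j t : ℕ} (h : j ≤ t + 1) :
    (j + t + 2).choose (t + 2) ≤ 4 * (j + t).choose t := by
  calc (j + t + 2).choose (t + 2)
      ≤ 2 * (j + t + 1).choose (t + 1) := choose_add_succ_le_two_mul (t := t + 1) (by omega)
    _ ≤ 2 * (2 * (j + t).choose t) := by gcongr; exact choose_add_succ_le_two_mul h
    _ = 4 * (j + t).choose t := by ring

theorem succ_mul_choose_add_succ (j m : ℕ) :
    (m + 1) * (j + m + 1).choose (m + 1) = (j + 1) * (j + 1 + m).choose m := by
  have h := Nat.choose_succ_right_eq (j + m + 1) m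
  rw [show j + m + 1 - m = j + 1 by omega] at h
  rw [add_right_comm j 1 m]
  linarith

theorem succ_succ_mul_choose_add_two_le {j k t : ℕ} (hjk : j < k) (hjt : j ≤ t) :
    (t + 2) * (j + t + 2).choose (t + 2) ≤ 2 * k * (j + 1 + t).choose t := by
  calc (t + 2) * (j + t + 2).choose (t + 2)
      = (j + 1) * (j + 1 + t + 1).choose (t + 1) := succ_mul_choose_add_succ j (t + 1)
    _ ≤ k * (2 * (j + 1 + t).choose t) := by
        gcongr
        · exact hjk
        · exact choose_add_succ_le_two_mul (by omega)
    _ = 2 * k * (j + 1 + t).choose t := by ring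

variable {t k : ℕ} {y : ℝ}

theorem sum_choose_add_two_mul_pow_le (hk : k ≤ t + 1) (hy : y ∈ Icc 0 1) :
    (1 - y) ^ (t + 1) * ∑ j ∈ Finset.range k, ((j + t + 2).choose (t + 2) : ℝ) * y ^ j ≤ 4 := by
  have hy0 : 0 ≤ y := hy.1
  have hy1 : 0 ≤ 1 - y := sub_nonneg.mpr hy.2
  calc (1 - y) ^ (t + 1) * ∑ j ∈ Finset.range k, ((j + t + 2).choose (t + 2) : ℝ) * y ^ j
      ≤ (1 - y) ^ (t + 1) * ∑ j ∈ Finset.range k, 4 * ((j + t).choose t : ℝ) * y ^ j := by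
        gcongr with j hj
        exact_mod_cast choose_add_two_le_four_mul (by grind)
    _ = 4 * ((1 - y) ^ (t + 1) * ∑ j ∈ Finset.range k, ((j + t).choose t : ℝ) * y ^ j) := by
        simp only [mul_assoc, ← Finset.mul_sum]
        ring
    _ ≤ 4 := by linarith [negBinomial_sum_le_one t (Finset.range k) hy]

theorem mul_sum_choose_add_two_mul_pow_le (hk : k ≤ t + 1) (hy : y ∈ Icc 0 1) :
    y * ((t + 2) * (1 - y) ^ (t + 1) *
      ∑ j ∈ Finset.range k, ((j + t + 2).choose (t + 2) : ℝ) * y ^ j) ≤ 2 * k := by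
  have hy0 : 0 ≤ y := hy.1
  have hy1 : 0 ≤ 1 - y := sub_nonneg.mpr hy.2
  calc y * ((t + 2) * (1 - y) ^ (t + 1) *
        ∑ j ∈ Finset.range k, ((j + t + 2).choose (t + 2) : ℝ) * y ^ j)
      = (1 - y) ^ (t + 1) *
          ∑ j ∈ Finset.range k, ((t + 2) * (j + t + 2).choose (t + 2) : ℝ) * y ^ (j + 1) := by
        simp only [Finset.mul_sum]
        exact Finset.sum_congr rfl fun j _ => by ring
    _ ≤ (1 - y) ^ (t + 1) *
          ∑ j ∈ Finset.range k, 2 * k * ((j + 1 + t).choose t : ℝ) * y ^ (j + 1) := by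
        gcongr _ * ∑ j ∈ _, ?_ * _ with j hj
        exact_mod_cast succ_succ_mul_choose_add_two_le (by grind) (by grind)
    _ = 2 * k * ((1 - y) ^ (t + 1) *
          ∑ i ∈ Finset.Ico 1 (k + 1), ((i + t).choose t : ℝ) * y ^ i) := by
        simp only [Finset.sum_Ico_eq_sum_range, add_tsub_cancel_right, add_comm 1, mul_assoc,
          ← Finset.mul_sum]
        ring
    _ ≤ 2 * k * 1 := by gcongr; exact negBinomial_sum_le_one t _ hy
    _ = 2 * k := mul_one _

end Binomial

section Ramp

variable (R : Type*) [CommRing R]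

/-- The Taylor polynomial at `0` of degree `j` of `(1 - X) ^ (-(m + 1))`. -/
noncomputable def invOneSubPowTaylor (m j : ℕ) : R[X] :=
  ∑ i ∈ Finset.range (j + 1), ((i + m).choose m : R[X]) * X ^ i

/-- The sum of the first `k` Taylor polynomials of `(1 - X) ^ (-(m + 1))`: the cofactor of
`(X - 1) ^ (m + 1)` in `ramp`. -/
noncomputable def rampCofactor (m k : ℕ) : R[X] :=
  ∑ j ∈ Finset.range k, invOneSubPowTaylor R m j

/-- A polynomial which, up to the sign `(-1) ^ (m + 1)`, decreases on `[0, 1]` from `k` to `0`.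
The base is `X - 1`, not `1 - X`, so that substituting `X ^ 2` gives a power of `X ^ 2 - 1`. -/
noncomputable def ramp (m k : ℕ) : R[X] :=
  (X - 1) ^ (m + 1) * rampCofactor R m k

theorem natDegree_invOneSubPowTaylor_le (m j : ℕ) : (invOneSubPowTaylor R m j).natDegree ≤ j := by
  refine natDegree_sum_le_of_forall_le _ _ fun i hi => ?_
  rw [← C_eq_natCast]
  exact (natDegree_C_mul_X_pow_le _ _).trans (Finset.mem_range_succ_iff.mp hi)

theorem natDegree_rampCofactor_le (m k : ℕ) : (rampCofactor R m k).natDegree ≤ k - 1 :=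
  natDegree_sum_le_of_forall_le _ _ fun j hj =>
    (natDegree_invOneSubPowTaylor_le R m j).trans (Nat.le_sub_one_of_lt (Finset.mem_range.mp hj))

theorem eval_zero_ramp (m k : ℕ) : (ramp R m k).eval 0 = (-1) ^ (m + 1) * k := by
  simp [ramp, rampCofactor, invOneSubPowTaylor, eval_finsetSum, Finset.sum_range_succ']

theorem derivative_X_sub_one_pow_mul_invOneSubPowTaylor (m j : ℕ) :
    derivative ((X - 1) ^ (m + 1) * invOneSubPowTaylor R m j) =
      (m + 1 : R[X]) * (X - 1) ^ m * (((j + m + 1).choose (m + 1) : R[X]) * X ^ j) := by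
  induction j with
  | zero => simp [invOneSubPowTaylor, derivative_pow]
  | succ j ih =>
    have hpascal : ((j + 1 + m + 1).choose (m + 1) : R[X]) =
        (j + 1 + m).choose m + (j + m + 1).choose (m + 1) := by
      rw [add_right_comm j m 1]
      exact_mod_cast congrArg (Nat.cast : ℕ → R[X]) (Nat.choose_succ_succ (j + 1 + m) m)
    have habsorb : (m + 1 : R[X]) * (j + m + 1).choose (m + 1) =
        (j + 1) * (j + 1 + m).choose m := by
      exact_mod_cast congrArg (Nat.cast : ℕ → R[X]) (succ_mul_choose_add_succ j m)
    have hsucc : invOneSubPowTaylor R m (j + 1) =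
        invOneSubPowTaylor R m j + ((j + 1 + m).choose m : R[X]) * X ^ (j + 1) :=
      Finset.sum_range_succ _ _
    rw [hsucc, mul_add, derivative_add, ih, hpascal]
    simp only [derivative_mul, derivative_pow, derivative_sub, derivative_X,
      derivative_one, derivative_natCast, map_natCast, Nat.add_sub_cancel]
    push_cast
    linear_combination (-(X - 1) ^ (m + 1) * X ^ j) * habsorb

theorem derivative_ramp (m k : ℕ) :
    derivative (ramp R m k) = (m + 1 : R[X]) * (X - 1) ^ m *
      ∑ j ∈ Finset.range k, ((j + m + 1).choose (m + 1) : R[X]) * X ^ j := by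
  simp only [ramp, rampCofactor, Finset.mul_sum, derivative_sum,
    derivative_X_sub_one_pow_mul_invOneSubPowTaylor]

theorem ramp_succ_comp_X_sq (m k : ℕ) :
    (ramp R (m + 1) k).comp (X ^ 2) =
      (X ^ 2 - 1) ^ (m + 1) * ((X - 1) * rampCofactor R (m + 1) k).comp (X ^ 2) := by
  simp only [ramp, mul_comp, pow_comp, sub_comp, X_comp, one_comp]
  ring

theorem natDegree_X_sub_one_mul_rampCofactor_comp_X_sq_le (m : ℕ) {k : ℕ} (hk : 1 ≤ k) :
    (((X - 1) * rampCofactor R m k).comp (X ^ 2)).natDegree ≤ 2 * k := by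
  have hlin : (X - 1 : R[X]).natDegree ≤ 1 := natDegree_X_sub_C_le 1
  have hprod : ((X - 1) * rampCofactor R m k).natDegree ≤ k :=
    (natDegree_mul_le_of_le hlin (natDegree_rampCofactor_le R m k)).trans (by omega)
  calc (((X - 1) * rampCofactor R m k).comp (X ^ 2)).natDegree
      ≤ ((X - 1) * rampCofactor R m k).natDegree * (X ^ 2 : R[X]).natDegree := natDegree_comp_le
    _ ≤ k * 2 := Nat.mul_le_mul hprod (natDegree_X_pow_le 2)
    _ = 2 * k := mul_comm _ _

end Ramp

section Bounds

variable {t k : ℕ}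

theorem abs_eval_derivative_ramp (m k : ℕ) {y : ℝ} (hy : y ∈ Icc 0 1) :
    |(derivative (ramp ℝ m k)).eval y| = (m + 1) * (1 - y) ^ m *
      ∑ j ∈ Finset.range k, ((j + m + 1).choose (m + 1) : ℝ) * y ^ j := by
  have hy0 : 0 ≤ y := hy.1
  have hm : |(m + 1 : ℝ)| = m + 1 := abs_of_nonneg (by positivity)
  have hbase : |y - 1| = 1 - y := by rw [abs_sub_comm, abs_of_nonneg (sub_nonneg.mpr hy.2)]
  have hsum : 0 ≤ ∑ j ∈ Finset.range k, ((j + m + 1).choose (m + 1) : ℝ) * y ^ j := by positivity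
  simp [derivative_ramp, eval_finsetSum, abs_mul, hm, hbase, abs_of_nonneg hsum]

theorem abs_eval_derivative_ramp_le (hk : k ≤ t + 1) {y : ℝ} (hy : y ∈ Icc 0 1) :
    |(derivative (ramp ℝ (t + 1) k)).eval y| ≤ 4 * (t + 2) := by
  rw [abs_eval_derivative_ramp _ _ hy, Nat.cast_add_one, add_assoc (t : ℝ), one_add_one_eq_two,
    mul_assoc, mul_comm 4]
  exact mul_le_mul_of_nonneg_left (sum_choose_add_two_mul_pow_le hk hy) (by positivity)

theorem mul_abs_eval_derivative_ramp_le (hk : k ≤ t + 1) {y : ℝ} (hy : y ∈ Icc 0 1) :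
    y * |(derivative (ramp ℝ (t + 1) k)).eval y| ≤ 2 * k := by
  rw [abs_eval_derivative_ramp _ _ hy, Nat.cast_add_one, add_assoc (t : ℝ), one_add_one_eq_two]
  exact mul_sum_choose_add_two_mul_pow_le hk hy

theorem abs_eval_derivative_ramp_comp_X_sq_le (hk : k ≤ t + 1) {x : ℝ} (hx : x ∈ Icc (-1) 1) :
    |(derivative ((ramp ℝ (t + 1) k).comp (X ^ 2))).eval x| ≤ 6 * √((t + 2) * k) := by
  have hy : x ^ 2 ∈ Icc (0 : ℝ) 1 := ⟨sq_nonneg x, by nlinarith [hx.1, hx.2]⟩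
  set slope := (derivative (ramp ℝ (t + 1) k)).eval (x ^ 2) with hslope
  have hchain : (derivative ((ramp ℝ (t + 1) k).comp (X ^ 2))).eval x = 2 * x * slope := by
    simp [derivative_comp, hslope, one_add_one_eq_two]
  refine abs_le_of_sq_le_sq ?_ (by positivity)
  rw [hchain, mul_pow 6, Real.sq_sqrt (by positivity)]
  calc (2 * x * slope) ^ 2 = 4 * ((x ^ 2 * |slope|) * |slope|) := by
        rw [mul_assoc (x ^ 2), abs_mul_abs_self]
        ring
    _ ≤ 4 * ((2 * k) * (4 * (t + 2)) : ℝ) := by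
        gcongr 4 * (?_ * ?_)
        · exact mul_abs_eval_derivative_ramp_le hk hy
        · exact abs_eval_derivative_ramp_le hk hy
    _ ≤ 6 ^ 2 * ((t + 2) * k) := by nlinarith [show (0 : ℝ) ≤ (t + 2) * k by positivity]

theorem abs_eval_zero_ramp_comp_X_sq (m k : ℕ) : |((ramp ℝ m k).comp (X ^ 2)).eval 0| = k := by
  simp [eval_comp, eval_zero_ramp, abs_mul]

theorem abs_eval_le_iSup {K : Set ℝ} (hK : IsCompact K) (p : ℝ[X]) {x : ℝ} (hx : x ∈ K) :
    |p.eval x| ≤ ⨆ z : K, |p.eval (z : ℝ)| := by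
  have := isCompact_iff_compactSpace.mp hK
  exact le_ciSup (f := fun z : K => |p.eval (z : ℝ)|)
    (isCompact_range (by fun_prop)).bddAbove ⟨x, hx⟩

end Bounds

theorem upper_bound_construction :
    ∃ c₂ : ℝ, 0 < c₂ ∧ ∀ n k : ℕ, 1 ≤ k → 2 * k ≤ n →
      ∃ R : Polynomial ℝ, R.natDegree ≤ 2 * k ∧
        ((X ^ 2 - 1) ^ (n - k) * R : Polynomial ℝ) ≠ 0 ∧
        (⨆ x : Icc (-1:ℝ) 1,
            |(Polynomial.derivative ((X ^ 2 - 1) ^ (n - k) * R : Polynomial ℝ)).eval (x : ℝ)|) ≤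
          c₂ * Real.sqrt ((n : ℝ) / (k : ℝ)) *
            ⨆ x : Icc (-1:ℝ) 1, |((X ^ 2 - 1) ^ (n - k) * R : Polynomial ℝ).eval (x : ℝ)| := by
  refine ⟨6, by norm_num, fun n k hk hn => ?_⟩
  obtain ⟨t, ht⟩ : ∃ t, n - k = t + 1 := ⟨n - k - 1, by omega⟩
  have hk0 : (0 : ℝ) < k := by exact_mod_cast hk
  have htn : (t + 2 : ℝ) ≤ n := by exact_mod_cast (by omega : t + 2 ≤ n)
  have hheight := abs_eval_zero_ramp_comp_X_sq (t + 1) k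
  refine ⟨((X - 1) * rampCofactor ℝ (t + 1) k).comp (X ^ 2),
    natDegree_X_sub_one_mul_rampCofactor_comp_X_sq_le ℝ (t + 1) hk, ?_⟩
  rw [ht, ← ramp_succ_comp_X_sq]
  refine ⟨fun hzero => hk0.ne (by simpa [hzero] using hheight), ?_⟩
  have : Nonempty (Icc (-1 : ℝ) 1) := ⟨0, by norm_num⟩
  refine ciSup_le fun x => ?_
  calc |(derivative ((ramp ℝ (t + 1) k).comp (X ^ 2))).eval (x : ℝ)|
      ≤ 6 * √((t + 2) * k) := abs_eval_derivative_ramp_comp_X_sq_le (by omega) x.2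
    _ ≤ 6 * √(n * k) := by gcongr
    _ = 6 * √(n / k) * k := by
        rw [show (n * k : ℝ) = n / k * k ^ 2 by field_simp, Real.sqrt_mul (by positivity),
          Real.sqrt_sq hk0.le, mul_assoc]
    _ ≤ _ := by
        gcongr
        exact hheight.symm.le.trans (abs_eval_le_iSup isCompact_Icc _ (by norm_num))
end
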